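/- arXiv:2512.13075 — 6 statements merged into one kernel-verified Lean document; each statement's English description precedes it below -/
import Mathlib

section
/- Let (X,d,f) be a TDS, μ a Borel probability measure on X, K ⊆ X a Borel set, α ≥ 0, φ : X → ℝ a positive continuous function, and s ∈ (0,∞). If P_μ^α(f,x,φ) ≤ s for all x ∈ K, then dim_BS^α(f,K,φ) ≤ s. -/
open Filter Set MeasureTheory ENNReal
open scoped Classical NNReal

noncomputable section

namespace AlphaBS

variable {X : Type*}

/-- Birkhoff sum `S_n φ (x) = ∑_{j<n} φ(f^j x)`. -/
def birk (f : X → X) (φ : X → ℝ) (n : ℕ) (x : X) : ℝ :=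
  ∑ j ∈ Finset.range n, φ (f^[j] x)

/-- The α-Bowen ball `B_n^α(x,ε) = {y : d_n^α(x,y) < ε}`, where
`d_n^α(x,y) = max_{0 ≤ i ≤ n-1} e^{αi} d(f^i x, f^i y)`, w.r.t. an explicit distance `d`. -/
def bowenBall (d : X → X → ℝ) (f : X → X) (α : ℝ) (n : ℕ) (x : X) (ε : ℝ) : Set X :=
  {y | ∀ i < n, Real.exp (α * i) * d (f^[i] x) (f^[i] y) < ε}

section covers

variable (d : X → X → ℝ) (f : X → X)

/-- `M^α(K,s,ε,n,φ)`: infimum over countable families of α-Bowen balls covering `K`. -/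
def Mpre (φ : X → ℝ) (α s ε : ℝ) (N : ℕ) (K : Set X) : ℝ≥0∞ :=
  ⨅ (c : ℕ → X) (m : ℕ → ℕ) (I : Set ℕ) (_ : I.Nonempty) (_ : ∀ i ∈ I, N ≤ m i)
    (_ : K ⊆ ⋃ i ∈ I, bowenBall d f α (m i) (c i) ε),
    ∑' i : I, ENNReal.ofReal
      (Real.exp (-s * sSup (birk f φ (m i) '' bowenBall d f α (m i) (c i) ε)))

/-- `M^α(K,s,ε,φ) = lim_{n→∞} M^α(K,s,ε,n,φ)` (the quantity is nondecreasing in `n`). -/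
def Mlim (φ : X → ℝ) (α s ε : ℝ) (K : Set X) : ℝ≥0∞ := ⨆ N : ℕ, Mpre d f φ α s ε N K

/-- `M^α(K,ε,φ) = inf {s ≥ 0 : M^α(K,s,ε,φ) = 0}`. -/
def Mcrit (φ : X → ℝ) (α ε : ℝ) (K : Set X) : EReal :=
  ⨅ (s : ℝ) (_ : 0 ≤ s) (_ : Mlim d f φ α s ε K = 0), (s : EReal)

/-- The α-BS dimension `dim_BS^α(f,K,φ) = lim_{ε→0} M^α(K,ε,φ)`
(the quantity is nonincreasing in `ε`). -/
def dimBS (φ : X → ℝ) (α : ℝ) (K : Set X) : EReal :=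
  ⨆ (ε : ℝ) (_ : 0 < ε), Mcrit d f φ α ε K

/-- `M^{α,1}(K,s,ε,n,φ)`: the variant with weights `exp(-s·S_{n_i}φ(x_i))` at the centers. -/
def M1pre (φ : X → ℝ) (α s ε : ℝ) (N : ℕ) (K : Set X) : ℝ≥0∞ :=
  ⨅ (c : ℕ → X) (m : ℕ → ℕ) (I : Set ℕ) (_ : I.Nonempty) (_ : ∀ i ∈ I, N ≤ m i)
    (_ : K ⊆ ⋃ i ∈ I, bowenBall d f α (m i) (c i) ε),
    ∑' i : I, ENNReal.ofReal (Real.exp (-s * birk f φ (m i) (c i)))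

def M1lim (φ : X → ℝ) (α s ε : ℝ) (K : Set X) : ℝ≥0∞ := ⨆ N : ℕ, M1pre d f φ α s ε N K

def M1crit (φ : X → ℝ) (α ε : ℝ) (K : Set X) : EReal :=
  ⨅ (s : ℝ) (_ : 0 ≤ s) (_ : M1lim d f φ α s ε K = 0), (s : EReal)

/-- The modified α-BS dimension `\widetilde{dim}_{BS}^α(f,K,φ)`. -/
def dimBS1 (φ : X → ℝ) (α : ℝ) (K : Set X) : EReal :=
  ⨆ (ε : ℝ) (_ : 0 < ε), M1crit d f φ α ε K

/-- `M^α(K,s,ε,n,1)`: covering quantity with weights `exp(-s n_i)`. -/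
def Epre (α s ε : ℝ) (N : ℕ) (K : Set X) : ℝ≥0∞ :=
  ⨅ (c : ℕ → X) (m : ℕ → ℕ) (I : Set ℕ) (_ : I.Nonempty) (_ : ∀ i ∈ I, N ≤ m i)
    (_ : K ⊆ ⋃ i ∈ I, bowenBall d f α (m i) (c i) ε),
    ∑' i : I, ENNReal.ofReal (Real.exp (-s * (m i : ℝ)))

def Elim (α s ε : ℝ) (K : Set X) : ℝ≥0∞ := ⨆ N : ℕ, Epre d f α s ε N K

def Ecrit (α ε : ℝ) (K : Set X) : EReal :=
  ⨅ (s : ℝ) (_ : 0 ≤ s) (_ : Elim d f α s ε K = 0), (s : EReal)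

/-- The α-Bowen topological entropy `h_top^{α,B}(f,K)` (i.e. `dim_BS^α(f,K,1)`,
computed with weights `exp(-s n_i)`). -/
def entB (α : ℝ) (K : Set X) : EReal := ⨆ (ε : ℝ) (_ : 0 < ε), Ecrit d f α ε K

/-- `ℳ_B^α(K,s,ε,n,h)`: the Pesin pressure covering quantity. -/
def Ppre (h : X → ℝ) (α s ε : ℝ) (N : ℕ) (K : Set X) : ℝ≥0∞ :=
  ⨅ (c : ℕ → X) (m : ℕ → ℕ) (I : Set ℕ) (_ : I.Nonempty) (_ : ∀ i ∈ I, N ≤ m i)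
    (_ : K ⊆ ⋃ i ∈ I, bowenBall d f α (m i) (c i) ε),
    ∑' i : I, ENNReal.ofReal
      (Real.exp (-s * (m i : ℝ) + sSup (birk f h (m i) '' bowenBall d f α (m i) (c i) ε)))

def Plim (h : X → ℝ) (α s ε : ℝ) (K : Set X) : ℝ≥0∞ := ⨆ N : ℕ, Ppre d f h α s ε N K

/-- `ℳ_B^α(K,ε,h) = inf {s ∈ ℝ : ℳ_B^α(K,s,ε,h) = 0}`. -/
def Pcrit (h : X → ℝ) (α ε : ℝ) (K : Set X) : EReal :=
  ⨅ (s : ℝ) (_ : Plim d f h α s ε K = 0), (s : EReal)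

/-- The α-Pesin topological pressure `P_B^α(f,K,h)`. -/
def pressureB (h : X → ℝ) (α : ℝ) (K : Set X) : EReal :=
  ⨆ (ε : ℝ) (_ : 0 < ε), Pcrit d f h α ε K

/-- `W^α(K,s,ε,n,φ)`: the weighted covering quantity. -/
def Wpre (φ : X → ℝ) (α s ε : ℝ) (N : ℕ) (K : Set X) : ℝ≥0∞ :=
  ⨅ (c : ℕ → X) (m : ℕ → ℕ) (w : ℕ → ℝ) (I : Set ℕ) (_ : I.Nonempty)
    (_ : ∀ i ∈ I, N ≤ m i) (_ : ∀ i ∈ I, 0 < w i)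
    (_ : ∀ x ∈ K, (1 : ℝ≥0∞) ≤
      ∑' i : I, (bowenBall d f α (m i) (c i) ε).indicator
        (fun _ => ENNReal.ofReal (w i)) x),
    ∑' i : I, ENNReal.ofReal (w i * Real.exp (-s * birk f φ (m i) (c i)))

def Wlim (φ : X → ℝ) (α s ε : ℝ) (K : Set X) : ℝ≥0∞ := ⨆ N : ℕ, Wpre d f φ α s ε N K

def Wcrit (φ : X → ℝ) (α ε : ℝ) (K : Set X) : EReal :=
  ⨅ (s : ℝ) (_ : 0 ≤ s) (_ : Wlim d f φ α s ε K = 0), (s : EReal)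

/-- The weighted α-BS dimension `dim_BS^{α,W}(f,K,φ)`. -/
def dimBSW (φ : X → ℝ) (α : ℝ) (K : Set X) : EReal :=
  ⨆ (ε : ℝ) (_ : 0 < ε), Wcrit d f φ α ε K

/-- `r_n(f,α,X,ε)`: the smallest cardinality of an `(n,α,ε)`-spanning set of `X`. -/
def spanNum (α ε : ℝ) (n : ℕ) : ℕ :=
  sInf {m : ℕ | ∃ E : Finset X, E.card = m ∧
    ∀ x : X, ∃ y ∈ E, ∀ i < n, Real.exp (α * i) * d (f^[i] y) (f^[i] x) < ε}

/-- `h_top^α(f,X,ε) = limsup_n (1/n) log r_n(f,α,X,ε)`. -/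
def htopSpanE (α ε : ℝ) : EReal :=
  limsup (fun n : ℕ => ((Real.log (spanNum d f α ε n) / n : ℝ) : EReal)) atTop

/-- the α-topological entropy `h_top^α(f,X) = lim_{ε→0} h_top^α(f,X,ε)`
(the quantity is nonincreasing in `ε`). -/
def htopSpan (α : ℝ) : EReal := ⨆ (ε : ℝ) (_ : 0 < ε), htopSpanE d f α ε

/-- `r_n(X, e^{-nε})`: smallest number of ε-neutralized Bowen balls needed to cover `X`. -/
def neutNum (ε : ℝ) (n : ℕ) : ℕ :=
  sInf {m : ℕ | ∃ E : Finset X, E.card = m ∧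
    ∀ x : X, ∃ y ∈ E, ∀ j < n, d (f^[j] y) (f^[j] x) < Real.exp (-(n : ℝ) * ε)}

/-- the neutralized ε-topological entropy. -/
def neutEntE (ε : ℝ) : EReal :=
  limsup (fun n : ℕ => ((Real.log (neutNum d f ε n) / n : ℝ) : EReal)) atTop

/-- the neutralized topological entropy `\tilde h_top(f,X) = inf_{ε>0} \tilde h_top(f,X,ε)`. -/
def neutEnt : EReal := ⨅ (ε : ℝ) (_ : 0 < ε), neutEntE d f ε

end covers

/-- `-log t`, valued in `[0,∞]` for `t ∈ [0,1]`, with `-log 0 = ∞`. -/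
def negLog (t : ℝ≥0∞) : ℝ≥0∞ := if t = 0 then ⊤ else ENNReal.ofReal (-Real.log t.toReal)

section measure

variable [MeasurableSpace X]

/-- `P_μ^α(f,x,φ) = lim_{ε→0} liminf_n (-log μ(B_n^α(x,ε)))/S_nφ(x)`. -/
def localBKphi (d : X → X → ℝ) (f : X → X) (φ : X → ℝ) (α : ℝ) (μ : Measure X)
    (x : X) : ℝ≥0∞ :=
  ⨆ (ε : ℝ) (_ : 0 < ε),
    liminf (fun n : ℕ =>
      negLog (μ (bowenBall d f α n x ε)) / ENNReal.ofReal (birk f φ n x)) atTop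

/-- The α-local Brin–Katok entropy `P_μ^α(f,φ) = ∫ P_μ^α(f,x,φ) dμ(x)`. -/
def BKphi (d : X → X → ℝ) (f : X → X) (φ : X → ℝ) (α : ℝ) (μ : Measure X) : ℝ≥0∞ :=
  ∫⁻ x, localBKphi d f φ α μ x ∂μ

/-- `lim_{ε→0} liminf_n (-log μ(B_n^α(x,ε)))/n`. -/
def localBKn (d : X → X → ℝ) (f : X → X) (α : ℝ) (μ : Measure X) (x : X) : ℝ≥0∞ :=
  ⨆ (ε : ℝ) (_ : 0 < ε),
    liminf (fun n : ℕ => negLog (μ (bowenBall d f α n x ε)) / (n : ℝ≥0∞)) atTop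

/-- The lower α-local Brin–Katok entropy `\underline h_μ^{BK}(f,α)`. -/
def BKn (d : X → X → ℝ) (f : X → X) (α : ℝ) (μ : Measure X) : ℝ≥0∞ :=
  ∫⁻ x, localBKn d f α μ x ∂μ

end measure

/-- diameter of a set w.r.t. an explicit distance. -/
def ediamD (d : X → X → ℝ) (U : Set X) : ℝ≥0∞ :=
  ⨆ (x ∈ U) (y ∈ U), ENNReal.ofReal (d x y)

/-- pre-Hausdorff measure at scale `δ`. -/
def hausPre (d : X → X → ℝ) (s δ : ℝ) (E : Set X) : ℝ≥0∞ :=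
  ⨅ (U : ℕ → Set X) (_ : E ⊆ ⋃ i, U i) (_ : ∀ i, ediamD d (U i) ≤ ENNReal.ofReal δ),
    ∑' i, ediamD d (U i) ^ s

/-- `s`-dimensional Hausdorff measure w.r.t. an explicit distance. -/
def hausMeas (d : X → X → ℝ) (s : ℝ) (E : Set X) : ℝ≥0∞ :=
  ⨆ (δ : ℝ) (_ : 0 < δ), hausPre d s δ E

/-- Hausdorff dimension w.r.t. an explicit distance:
`dim_H(E,d) = inf {s ≥ 0 : H^s(E) = 0}`. -/
def hausDim (d : X → X → ℝ) (E : Set X) : ℝ≥0∞ :=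
  ⨅ (s : ℝ≥0) (_ : hausMeas d s E = 0), (s : ℝ≥0∞)

/-- The left shift on `Σ_k^+ = {0,…,k-1}^ℕ`. -/
def shiftMap (k : ℕ) : (ℕ → Fin k) → (ℕ → Fin k) := fun x n => x (n + 1)

/-- The metric `d(x,y) = e^{-n(x,y)}` on `Σ_k^+`, where `n(x,y)` is the least index
at which `x` and `y` differ, and `d(x,x) = 0`. -/
def shiftDist {k : ℕ} (x y : ℕ → Fin k) : ℝ :=
  if x = y then 0 else Real.exp (-((sInf {n : ℕ | x n ≠ y n} : ℕ) : ℝ))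

/-- The subshift of finite type `Σ_A^+` determined by the incidence matrix `A`. -/
def SFT {k : ℕ} (A : Matrix (Fin k) (Fin k) ℝ) : Type :=
  {x : ℕ → Fin k // ∀ n, A (x n) (x (n + 1)) = 1}

/-- The left shift restricted to `Σ_A^+`. -/
def sftShift {k : ℕ} (A : Matrix (Fin k) (Fin k) ℝ) : SFT A → SFT A :=
  fun x => ⟨fun n => x.1 (n + 1), fun n => x.2 (n + 1)⟩

/-- The metric `d` restricted to `Σ_A^+`. -/
def sftDist {k : ℕ} (A : Matrix (Fin k) (Fin k) ℝ) : SFT A → SFT A → ℝ :=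
  fun x y => shiftDist x.1 y.1

end AlphaBS

open AlphaBS


namespace AlphaBS

lemma Mpre_le_aux {X ι : Type*} [Countable ι] [Nonempty ι] (d : X → X → ℝ) (f : X → X)
    (φ : X → ℝ) (α s ε : ℝ) (N : ℕ) (K : Set X) (c : ι → X) (m : ι → ℕ)
    (hm : ∀ i, N ≤ m i) (hcov : K ⊆ ⋃ i, bowenBall d f α (m i) (c i) ε) :
    Mpre d f φ α s ε N K ≤ ∑' i : ι, ENNReal.ofReal
      (Real.exp (-s * sSup (birk f φ (m i) '' bowenBall d f α (m i) (c i) ε))) := by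
  obtain ⟨g, hg⟩ := exists_injective_nat ι
  have hl : ∀ i, Function.invFun g (g i) = i := Function.leftInverse_invFun hg
  unfold Mpre
  refine iInf_le_of_le (c ∘ Function.invFun g) (iInf_le_of_le (m ∘ Function.invFun g)
    (iInf_le_of_le (Set.range g) (iInf_le_of_le (Set.range_nonempty g) (iInf_le_of_le ?_
      (iInf_le_of_le ?_ ?_)))))
  · intro i _
    exact hm _
  · intro x hx
    obtain ⟨i, hi⟩ := Set.mem_iUnion.1 (hcov hx)
    refine Set.mem_iUnion₂.2 ⟨g i, ⟨i, rfl⟩, ?_⟩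
    simpa [hl] using hi
  · rw [← (Equiv.ofInjective g hg).tsum_eq]
    apply le_of_eq
    congr 1
    ext i
    simp [hl]

lemma isOpen_bowenBall {X : Type*} [MetricSpace X] (f : X → X) (hf : Continuous f) (α : ℝ)
    (n : ℕ) (x : X) (ε : ℝ) : IsOpen (bowenBall dist f α n x ε) := by
  have : bowenBall dist f α n x ε =
      ⋂ i ∈ Set.Iio n, {y | Real.exp (α * i) * dist (f^[i] x) (f^[i] y) < ε} := by
    ext y; simp [bowenBall]
  rw [this]
  refine (Set.finite_Iio n).isOpen_biInter fun i _ => ?_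
  have := hf.iterate i
  exact isOpen_lt (by fun_prop) continuous_const

lemma continuous_birk {X : Type*} [MetricSpace X] (f : X → X) (hf : Continuous f)
    (φ : X → ℝ) (hφ : Continuous φ) (n : ℕ) : Continuous (birk f φ n) := by
  unfold birk
  exact continuous_finsetSum _ fun j _ => hφ.comp (hf.iterate j)

lemma self_mem_bowenBall {X : Type*} [MetricSpace X] (f : X → X) (α : ℝ)
    (n : ℕ) (x : X) (ε : ℝ) (hε : 0 < ε) : x ∈ bowenBall dist f α n x ε := by
  intro i _
  simpa using hε

lemma bowenBall_trans {X : Type*} [MetricSpace X] (f : X → X) (α : ℝ)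
    (n : ℕ) (x y z : X) (ε : ℝ) (hx : z ∈ bowenBall dist f α n x (ε / 2))
    (hy : z ∈ bowenBall dist f α n y (ε / 2)) : x ∈ bowenBall dist f α n y ε := by
  intro i hi
  have h1 := hx i hi
  have h2 := hy i hi
  have h3 := dist_triangle_right (f^[i] y) (f^[i] x) (f^[i] z)
  have h4 := mul_le_mul_of_nonneg_left h3 (Real.exp_pos (α * i)).le
  linarith

lemma birk_ge {X : Type*} (f : X → X) (φ : X → ℝ) (c : ℝ) (hc : ∀ x, c ≤ φ x) (n : ℕ) (x : X) :
    c * n ≤ birk f φ n x := by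
  unfold birk
  have := Finset.card_nsmul_le_sum (Finset.range n) (fun j => φ (f^[j] x)) c (fun j _ => hc _)
  simpa [mul_comm] using this

lemma weight_le {X : Type*} [MetricSpace X] [CompactSpace X] (f : X → X) (hf : Continuous f)
    (φ : X → ℝ) (hφ : Continuous φ) (α s ε : ℝ) (hs : 0 ≤ s) (hε : 0 < ε) (n : ℕ) (x : X) :
    Real.exp (-s * sSup (birk f φ n '' bowenBall dist f α n x ε)) ≤
      Real.exp (-s * birk f φ n x) := by
  apply Real.exp_le_exp.2
  have hb : BddAbove (birk f φ n '' bowenBall dist f α n x ε) :=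
    ((isCompact_univ.image (continuous_birk f hf φ hφ n)).bddAbove).mono
      (Set.image_mono (Set.subset_univ _))
  have := le_csSup hb ⟨x, self_mem_bowenBall f α n x ε hε, rfl⟩
  nlinarith

lemma exp_le_of_negLog (t : ℝ≥0∞) (ht : t ≠ ⊤) (S a : ℝ) (hS : 0 < S) (ha : 0 < a)
    (h : negLog t / ENNReal.ofReal S < ENNReal.ofReal a) :
    ENNReal.ofReal (Real.exp (-a * S)) ≤ t := by
  have hS' : ENNReal.ofReal S ≠ 0 := by simpa using hS
  have h1 := (ENNReal.div_lt_iff (Or.inl hS') (Or.inl ENNReal.ofReal_ne_top)).1 h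
  unfold negLog at h1
  split_ifs at h1 with h0
  · simp at h1
  · rw [← ENNReal.ofReal_mul ha.le, ENNReal.ofReal_lt_ofReal_iff (by positivity)] at h1
    have hp : 0 < t.toReal := ENNReal.toReal_pos h0 ht
    apply ENNReal.ofReal_le_of_le_toReal
    rw [← Real.le_log_iff_exp_le hp]
    linarith

lemma exists_family {X : Type*} [MetricSpace X] [MeasurableSpace X] [BorelSpace X]
    (f : X → X) (hf : Continuous f) (μ : Measure X) [IsProbabilityMeasure μ]
    (φ : X → ℝ) (α a ε : ℝ) (n : ℕ) :
    ∃ u : Set X, u.Countable ∧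
      (∀ x, ENNReal.ofReal (Real.exp (-a * birk f φ n x)) ≤ μ (bowenBall dist f α n x (ε / 2)) →
        ∃ y ∈ u, x ∈ bowenBall dist f α n y ε) ∧
      ∑' y : u, ENNReal.ofReal (Real.exp (-a * birk f φ n y)) ≤ 1 := by
  set t : Set X := {x | ENNReal.ofReal (Real.exp (-a * birk f φ n x)) ≤
    μ (bowenBall dist f α n x (ε / 2))} with ht
  have hpos : ∀ x ∈ t, 0 < μ (bowenBall dist f α n x (ε / 2)) := fun x hx =>
    lt_of_lt_of_le (by simpa using Real.exp_pos _) hx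
  obtain ⟨u, hut, hdisj, hu⟩ := Vitali.exists_disjoint_subfamily_covering_enlargement
    (fun x => bowenBall dist f α n x (ε / 2)) t (fun _ => (1 : ℝ)) 2 one_lt_two
    (fun _ _ => zero_le_one) 1 (fun _ _ => le_rfl)
    (fun x hx => nonempty_of_measure_ne_zero (hpos x hx).ne')
  have hmeas : ∀ x, MeasurableSet (bowenBall dist f α n x (ε / 2)) := fun x =>
    (isOpen_bowenBall f hf α n x _).measurableSet
  have hd : Pairwise (Function.onFun Disjoint fun y : u => bowenBall dist f α n y.1 (ε / 2)) :=
    fun x y hxy => hdisj x.2 y.2 (fun h => hxy (Subtype.ext h))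
  have hcount : u.Countable := by
    have h := Measure.countable_meas_pos_of_disjoint_iUnion (μ := μ)
      (As := fun y : u => bowenBall dist f α n y.1 (ε / 2)) (fun y => hmeas _) hd
    have h2 : {i : u | 0 < μ (bowenBall dist f α n i.1 (ε / 2))} = Set.univ :=
      Set.eq_univ_of_forall fun y => hpos _ (hut y.2)
    rw [h2] at h
    exact Set.countable_coe_iff.1 (Set.countable_univ_iff.1 h)
  refine ⟨u, hcount, ?_, ?_⟩
  · intro x hx
    obtain ⟨y, hy, ⟨z, hz1, hz2⟩, -⟩ := hu x hx
    exact ⟨y, hy, bowenBall_trans f α n x y z ε hz1 hz2⟩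
  · calc _ ≤ ∑' y : u, μ (bowenBall dist f α n y.1 (ε / 2)) :=
          ENNReal.tsum_le_tsum fun y => hut y.2
      _ ≤ μ Set.univ := tsum_measure_le_measure_univ (fun y => (hmeas _).nullMeasurableSet)
          (fun x y hxy => (hd hxy).aedisjoint)
      _ = 1 := measure_univ

end AlphaBS

/-- Billingsley-type, upper bound: if `P_μ^α(f,x,φ) ≤ s` for all `x ∈ K`,
then `dim_BS^α(f,K,φ) ≤ s`. -/
theorem stmt7 {X : Type*} [MetricSpace X] [CompactSpace X]
    [MeasurableSpace X] [BorelSpace X]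
    (f : X → X) (hf : Continuous f) (μ : Measure X) [IsProbabilityMeasure μ]
    (K : Set X) (hK : MeasurableSet K) (α : ℝ) (hα : 0 ≤ α)
    (φ : X → ℝ) (hφc : Continuous φ) (hφ : ∀ x, 0 < φ x)
    (s : ℝ) (hs : 0 < s)
    (hub : ∀ x ∈ K, localBKphi dist f φ α μ x ≤ ENNReal.ofReal s) :
    dimBS dist f φ α K ≤ (s : EReal) := by
  obtain ⟨x₀⟩ : Nonempty X := by
    by_contra h
    rw [not_nonempty_iff] at h
    have h1 : μ Set.univ = 1 := measure_univ
    rw [Set.univ_eq_empty_iff.2 h, measure_empty] at h1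
    exact zero_ne_one h1
  obtain ⟨c, hc, hcφ⟩ : ∃ c : ℝ, 0 < c ∧ ∀ x, c ≤ φ x := by
    obtain ⟨z, -, hz⟩ := isCompact_univ.exists_isMinOn ⟨x₀, Set.mem_univ _⟩ hφc.continuousOn
    exact ⟨φ z, hφ z, fun x => hz (Set.mem_univ x)⟩
  unfold dimBS
  refine iSup₂_le fun ε hε => ?_
  refine EReal.le_of_forall_lt_iff_le.1 ?_
  intro b hb
  have hb' : s < b := by exact_mod_cast hb
  obtain ⟨a, hsa, hab⟩ := exists_between hb'
  have ha : 0 < a := hs.trans hsa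
  have hb0 : 0 < b := ha.trans hab
  unfold Mcrit
  refine iInf_le_of_le b (iInf_le_of_le hb0.le (iInf_le_of_le ?_ le_rfl))
  unfold Mlim
  rw [ENNReal.iSup_eq_zero]
  intro N
  set F : ℕ → ℝ≥0∞ := fun k => ENNReal.ofReal (Real.exp (-((b - a) * c))) ^ k with hF
  have hr : ENNReal.ofReal (Real.exp (-((b - a) * c))) < 1 := by
    rw [ENNReal.ofReal_lt_one, Real.exp_lt_one_iff]
    have := mul_pos (sub_pos.2 hab) hc
    linarith
  have hFsum : ∑' k, F k ≠ ⊤ := by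
    rw [hF, ENNReal.tsum_geometric]
    exact ENNReal.inv_ne_top.2 (tsub_pos_of_lt hr).ne'
  have htend := ENNReal.tendsto_sum_nat_add F hFsum
  have hw : ∀ n x, ENNReal.ofReal (Real.exp
      (-b * sSup (birk f φ n '' bowenBall dist f α n x ε))) ≤
      F n * ENNReal.ofReal (Real.exp (-a * birk f φ n x)) := by
    intro n x
    rw [hF]
    simp only
    rw [← ENNReal.ofReal_pow (Real.exp_pos _).le, ← ENNReal.ofReal_mul (by positivity)]
    apply ENNReal.ofReal_le_ofReal
    refine (weight_le f hf φ hφc α b ε hb0.le hε n x).trans ?_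
    rw [← Real.exp_nat_mul, ← Real.exp_add]
    apply Real.exp_le_exp.2
    have h1 := birk_ge f φ c hcφ n x
    have h2 := mul_le_mul_of_nonneg_left h1 (sub_pos.2 hab).le
    nlinarith
  clear_value F
  have key : ∀ M, N ≤ M → Mpre dist f φ α b ε N K ≤ ∑' k, F (k + M) := by
    intro M hM
    rcases K.eq_empty_or_nonempty with rfl | hKne
    · refine (Mpre_le_aux (ι := Unit) dist f φ α b ε N ∅ (fun _ => x₀) (fun _ => M)
        (fun _ => hM) (Set.empty_subset _)).trans ?_
      rw [tsum_fintype]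
      simp only [Finset.univ_unique, Finset.sum_const, Finset.card_singleton, one_smul]
      refine (hw M x₀).trans (le_trans ?_ (ENNReal.le_tsum 0))
      rw [zero_add]
      refine mul_le_of_le_one_right' ?_
      rw [ENNReal.ofReal_le_one, Real.exp_le_one_iff]
      have h1 := birk_ge f φ c hcφ M x₀
      have h2 : 0 ≤ birk f φ M x₀ := le_trans (by positivity) h1
      nlinarith
    · choose u huc hucov husum using fun n => exists_family f hf μ φ α a ε n
      have hcov : ∀ x ∈ K, ∃ k, ∃ y ∈ u (k + M), x ∈ bowenBall dist f α (k + M) y ε := by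
        intro x hx
        have h1 : liminf (fun n : ℕ => negLog (μ (bowenBall dist f α n x (ε / 2))) /
            ENNReal.ofReal (birk f φ n x)) atTop < ENNReal.ofReal a := by
          refine lt_of_le_of_lt ((le_iSup₂ (f := fun (ε : ℝ) (_ : 0 < ε) =>
            liminf (fun n : ℕ => negLog (μ (bowenBall dist f α n x ε)) /
              ENNReal.ofReal (birk f φ n x)) atTop) (ε / 2) (half_pos hε)).trans (hub x hx)) ?_
          exact (ENNReal.ofReal_lt_ofReal_iff ha).2 hsa
        have h2 := frequently_lt_of_liminf_lt (by isBoundedDefault) h1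
        obtain ⟨n, hn, hlt⟩ := (frequently_atTop.1 h2) (M + 1)
        have hS : 0 < birk f φ n x := by
          refine lt_of_lt_of_le (mul_pos hc ?_) (birk_ge f φ c hcφ n x)
          have : 0 < n := by omega
          exact_mod_cast this
        obtain ⟨y, hy, hxy⟩ := hucov n x
          (exp_le_of_negLog _ (measure_ne_top _ _) _ a hS ha hlt)
        refine ⟨n - M, ?_⟩
        rw [Nat.sub_add_cancel (by omega)]
        exact ⟨y, hy, hxy⟩
      have : ∀ k, Countable (u (k + M)) := fun k => (huc _).to_subtype
      have : Nonempty (Σ k : ℕ, u (k + M)) := by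
        obtain ⟨x, hx⟩ := hKne
        obtain ⟨k, y, hy, -⟩ := hcov x hx
        exact ⟨⟨k, y, hy⟩⟩
      refine (Mpre_le_aux (ι := Σ k : ℕ, u (k + M)) dist f φ α b ε N K (fun p => p.2.1)
        (fun p => p.1 + M) (fun p => hM.trans (Nat.le_add_left _ _)) ?_).trans ?_
      · intro x hx
        obtain ⟨k, y, hy, hxy⟩ := hcov x hx
        exact Set.mem_iUnion.2 ⟨⟨k, y, hy⟩, hxy⟩
      · rw [ENNReal.tsum_sigma']
        refine ENNReal.tsum_le_tsum fun k => ?_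
        calc _ ≤ ∑' y : u (k + M), F (k + M) *
                ENNReal.ofReal (Real.exp (-a * birk f φ (k + M) y.1)) :=
              ENNReal.tsum_le_tsum fun y => hw (k + M) y.1
          _ = F (k + M) * ∑' y : u (k + M),
                ENNReal.ofReal (Real.exp (-a * birk f φ (k + M) y.1)) := ENNReal.tsum_mul_left
          _ ≤ F (k + M) * 1 := mul_le_mul_right (husum (k + M)) _
          _ = F (k + M) := mul_one _
  have : Mpre dist f φ α b ε N K ≤ 0 :=
    ge_of_tendsto htend (eventually_atTop.2 ⟨N, fun M hM => key M hM⟩)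
  exact le_antisymm this bot_le
end
end

section
/- Let (X,d,f) be a TDS, μ a Borel probability measure on X, K ⊆ X a Borel set, α ≥ 0, φ : X → ℝ a positive continuous function, and s ∈ (0,∞). If P_μ^α(f,x,φ) ≥ s for all x ∈ K and μ(K) > 0, then dim_BS^α(f,K,φ) ≥ s. -/
open Filter Set MeasureTheory ENNReal
open scoped Classical NNReal

noncomputable section

open AlphaBS

theorem aux_negLog (p : ℝ≥0∞) (hp : p ≤ 1) (a : ℝ)
    (h : ENNReal.ofReal a ≤ negLog p) : p ≤ ENNReal.ofReal (Real.exp (-a)) := by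
  unfold negLog at h
  split_ifs at h with h0
  · simp [h0]
  · have hpt : p ≠ ⊤ := ne_top_of_le_ne_top one_ne_top hp
    have hpos : 0 < p.toReal := ENNReal.toReal_pos h0 hpt
    have hle1 : p.toReal ≤ 1 := by
      simpa using ENNReal.toReal_mono one_ne_top hp
    have hnl : 0 ≤ -Real.log p.toReal := by
      have := Real.log_nonpos hpos.le hle1
      linarith
    have h2 : a ≤ -Real.log p.toReal := (ENNReal.ofReal_le_ofReal_iff hnl).1 h
    rw [← ENNReal.ofReal_toReal hpt]
    apply ENNReal.ofReal_le_ofReal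
    rw [← Real.log_le_iff_le_exp hpos]
    linarith

theorem aux_main {X : Type*} [MetricSpace X] [CompactSpace X]
    [MeasurableSpace X]
    (f : X → X) (μ : Measure X) [IsProbabilityMeasure μ]
    (K : Set X) (α : ℝ) (hα : 0 ≤ α)
    (φ : X → ℝ) (hφc : Continuous φ) (hφ : ∀ x, 0 < φ x)
    (s t : ℝ) (ht : 0 < t) (hts : t < s) (hμK : 0 < μ K)
    (hlb : ∀ x ∈ K, ENNReal.ofReal s ≤ localBKphi dist f φ α μ x) :
    (t : EReal) ≤ dimBS dist f φ α K := by
  obtain ⟨t', htt', ht's⟩ := exists_between hts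
  have hq1 : 1 < t' / t := by rwa [one_lt_div ht]
  have hlogc : Continuous (fun x => Real.log (φ x)) :=
    hφc.log (fun x => (hφ x).ne')
  have huc := CompactSpace.uniformContinuous_of_continuous hlogc
  obtain ⟨δ, hδ, hδφ⟩ := Metric.uniformContinuous_iff.1 huc (Real.log (t' / t)) (Real.log_pos hq1)
  have hδ' : ∀ a b : X, dist a b < δ → φ a ≤ t' / t * φ b := by
    intro a b hab
    have h1 := hδφ hab
    rw [Real.dist_eq] at h1
    have h2 := (abs_lt.1 h1).2
    have h3 : Real.log (φ a) ≤ Real.log (t' / t * φ b) := by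
      rw [Real.log_mul (by positivity) (hφ b).ne']
      linarith
    exact (Real.log_le_log_iff (hφ a) (mul_pos (by positivity) (hφ b))).1 h3
  let E : ℕ → Set X := fun k => {x | x ∈ K ∧ ∀ n ≥ k,
    μ (bowenBall dist f α n x (1 / ((k : ℝ) + 1))) ≤
      ENNReal.ofReal (Real.exp (-(t' * birk f φ n x)))}
  have hKE : K ⊆ ⋃ k, E k := by
    intro x hx
    have h1 : ENNReal.ofReal t' < localBKphi dist f φ α μ x :=
      lt_of_lt_of_le ((ENNReal.ofReal_lt_ofReal_iff (by linarith)).2 ht's) (hlb x hx)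
    unfold localBKphi at h1
    simp only [lt_iSup_iff] at h1
    obtain ⟨ε, hε, h2⟩ := h1
    have h3 := eventually_lt_of_lt_liminf h2
    obtain ⟨N, hN⟩ := eventually_atTop.1 h3
    obtain ⟨M, hM⟩ := exists_nat_one_div_lt hε
    refine mem_iUnion.2 ⟨max N M, hx, fun n hn => ?_⟩
    have hnN : N ≤ n := le_trans (le_max_left _ _) hn
    have h4 := ENNReal.mul_le_of_le_div (hN n hnN).le
    rw [← ENNReal.ofReal_mul (by linarith)] at h4
    refine le_trans (measure_mono ?_) (aux_negLog _ prob_le_one _ h4)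
    intro y hy i hi
    refine (hy i hi).trans_le (le_trans ?_ hM.le)
    apply one_div_le_one_div_of_le (by positivity)
    have : (M : ℝ) ≤ ((max N M : ℕ) : ℝ) := by exact_mod_cast le_max_right _ _
    linarith
  have hex : ∃ k, μ (E k) ≠ 0 := by
    by_contra! hcon
    exact hμK.ne' (measure_mono_null hKE (measure_iUnion_null hcon))
  obtain ⟨k, hk⟩ := hex
  let ε : ℝ := min (1 / ((k : ℝ) + 1)) δ / 2
  have hε : 0 < ε := by
    have : (0 : ℝ) < 1 / ((k : ℝ) + 1) := by positivity
    have := lt_min this hδ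
    simp only [ε]; linarith
  have hε1 : 2 * ε ≤ 1 / ((k : ℝ) + 1) := by
    have := min_le_left (1 / ((k : ℝ) + 1)) δ
    simp only [ε]; linarith
  have hε2 : 2 * ε ≤ δ := by
    have := min_le_right (1 / ((k : ℝ) + 1)) δ
    simp only [ε]; linarith
  refine le_trans ?_ (le_iSup₂ (f := fun (ε : ℝ) (_ : 0 < ε) => Mcrit dist f φ α ε K) ε hε)
  refine le_iInf fun r => le_iInf fun hr => le_iInf fun hM => ?_
  by_contra hrt
  have hrt : r < t := by
    have := not_le.1 hrt
    exact_mod_cast this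
  have hpre : Mpre dist f φ α r ε k K = 0 :=
    le_antisymm (hM ▸ le_iSup (fun N => Mpre dist f φ α r ε N K) k) zero_le
  apply hk
  refine le_antisymm (hpre ▸ ?_) zero_le
  refine le_iInf fun c => le_iInf fun m => le_iInf fun I => le_iInf fun _ =>
    le_iInf fun hm => le_iInf fun hcov => ?_
  have hsub : E k ⊆ ⋃ i : I, (E k ∩ bowenBall dist f α (m i) (c i) ε) := by
    intro x hx
    have := hcov hx.1
    simp only [mem_iUnion] at this
    obtain ⟨i, hi, hxi⟩ := this
    exact mem_iUnion.2 ⟨⟨i, hi⟩, hx, hxi⟩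
  refine (measure_mono hsub).trans ((measure_iUnion_le _).trans (ENNReal.tsum_le_tsum ?_))
  rintro ⟨i, hi⟩
  simp only
  rcases (E k ∩ bowenBall dist f α (m i) (c i) ε).eq_empty_or_nonempty with he | ⟨y, hyE, hyB⟩
  · rw [he]; simp
  have htri : ∀ z ∈ bowenBall dist f α (m i) (c i) ε, ∀ j < m i,
      Real.exp (α * j) * dist (f^[j] y) (f^[j] z) < 2 * ε := by
    intro z hz j hj
    have h1 := hyB j hj
    have h2 := hz j hj
    have h3 := mul_le_mul_of_nonneg_left
      (dist_triangle_left (f^[j] y) (f^[j] z) (f^[j] (c i))) (Real.exp_pos (α * j)).le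
    linarith
  have hball : E k ∩ bowenBall dist f α (m i) (c i) ε ⊆
      bowenBall dist f α (m i) y (1 / ((k : ℝ) + 1)) :=
    fun z hz j hj => (htri z hz.2 j hj).trans_le hε1
  refine (measure_mono hball).trans ((hyE.2 (m i) (hm i hi)).trans ?_)
  apply ENNReal.ofReal_le_ofReal
  apply Real.exp_le_exp.2
  have hS0 : 0 ≤ birk f φ (m i) y := Finset.sum_nonneg fun j _ => (hφ _).le
  have hsup : sSup (birk f φ (m i) '' bowenBall dist f α (m i) (c i) ε) ≤
      t' / t * birk f φ (m i) y := by
    apply csSup_le (Set.Nonempty.image _ ⟨y, hyB⟩)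
    rintro _ ⟨z, hz, rfl⟩
    unfold birk
    rw [Finset.mul_sum]
    refine Finset.sum_le_sum fun j hj => hδ' _ _ ?_
    have h1 := htri z hz j (Finset.mem_range.1 hj)
    have h2 : 1 ≤ Real.exp (α * j) := Real.one_le_exp (by positivity)
    rw [dist_comm]
    have h3 := mul_le_mul_of_nonneg_right h2 (dist_nonneg (x := f^[j] y) (y := f^[j] z))
    linarith
  have h1 := mul_le_mul_of_nonneg_left hsup hr
  have h2 : r * (t' / t * birk f φ (m i) y) ≤ t * (t' / t * birk f φ (m i) y) :=
    mul_le_mul_of_nonneg_right hrt.le (by positivity)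
  have h3 : t * (t' / t * birk f φ (m i) y) = t' * birk f φ (m i) y := by
    field_simp
  linarith

/-- Billingsley-type, lower bound: if `P_μ^α(f,x,φ) ≥ s` for all `x ∈ K`
and `μ(K) > 0`, then `dim_BS^α(f,K,φ) ≥ s`. -/
theorem stmt8 {X : Type*} [MetricSpace X] [CompactSpace X]
    [MeasurableSpace X] [BorelSpace X]
    (f : X → X) (hf : Continuous f) (μ : Measure X) [IsProbabilityMeasure μ]
    (K : Set X) (hK : MeasurableSet K) (α : ℝ) (hα : 0 ≤ α)
    (φ : X → ℝ) (hφc : Continuous φ) (hφ : ∀ x, 0 < φ x)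
    (s : ℝ) (hs : 0 < s) (hμK : 0 < μ K)
    (hlb : ∀ x ∈ K, ENNReal.ofReal s ≤ localBKphi dist f φ α μ x) :
    (s : EReal) ≤ dimBS dist f φ α K := by
  by_contra hcon
  obtain ⟨r, hr1, hr2⟩ := EReal.lt_iff_exists_real_btwn.1 (not_le.1 hcon)
  have hrs : r < s := by exact_mod_cast hr2
  obtain ⟨t, h1, h2⟩ := exists_between (max_lt hrs hs)
  have h := aux_main f μ K α hα φ hφc hφ s t ((le_max_right _ _).trans_lt h1) h2 hμK hlb
  have h4 : (r : EReal) < t := by exact_mod_cast (le_max_left _ _).trans_lt h1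
  exact lt_irrefl _ ((h.trans_lt hr1).trans h4)

end
end

section
/- Let (X,d,f) be a TDS, K ⊆ X, α ≥ 0, and φ ∈ C(X,ℝ) with φ > 0. Then the weighted α-BS dimension coincides with the α-BS dimension: dim_BS^{α,W}(f,K,φ) = dim_BS^α(f,K,φ). -/
open Filter Set MeasureTheory ENNReal
open scoped Classical NNReal

noncomputable section

open AlphaBS

namespace AlphaBS

lemma birk_cont {X : Type*} [TopologicalSpace X] {f : X → X} (hf : Continuous f) {φ : X → ℝ}
    (hφ : Continuous φ) (n : ℕ) : Continuous (birk f φ n) := by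
  unfold birk
  exact continuous_finsetSum _ fun j _ => hφ.comp (hf.iterate j)

lemma birk_bdd {X : Type*} [TopologicalSpace X] [CompactSpace X] {f : X → X} (hf : Continuous f)
    {φ : X → ℝ} (hφ : Continuous φ) (n : ℕ) (s : Set X) : BddAbove (birk f φ n '' s) :=
  (isCompact_range (birk_cont hf hφ n)).bddAbove.mono (image_subset_range _ _)

lemma self_mem {X : Type*} [MetricSpace X] (f : X → X) (α : ℝ) (n : ℕ) (x : X) {ε : ℝ}
    (hε : 0 < ε) : x ∈ bowenBall dist f α n x ε := by
  intro i _
  simpa using hε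

lemma exists_lb {X : Type*} [TopologicalSpace X] [CompactSpace X] {φ : X → ℝ}
    (hφc : Continuous φ) (hφ : ∀ x, 0 < φ x) : ∃ a > 0, ∀ x, a ≤ φ x := by
  rcases isEmpty_or_nonempty X with h | h
  · exact ⟨1, one_pos, fun x => (h.false x).elim⟩
  · obtain ⟨x, -, hx⟩ := isCompact_univ.exists_isMinOn univ_nonempty hφc.continuousOn
    exact ⟨φ x, hφ x, fun y => hx (mem_univ y)⟩

lemma W_le_M {X : Type*} [MetricSpace X]
    (f : X → X) (K : Set X) (α : ℝ) (hα : 0 ≤ α)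
    (φ : X → ℝ) (hφ : ∀ x, 0 < φ x) {s s' η ε ε0 : ℝ} (hs : 0 ≤ s)
    (hss : s * (1 + η) ≤ s') (hε : 0 < ε) (hεε : ε ≤ ε0)
    (hmod : ∀ x y, dist x y < ε → φ y ≤ (1 + η) * φ x) (N : ℕ) :
    Wpre dist f φ α s' ε0 N K ≤ Mpre dist f φ α s ε N K := by
  unfold Mpre
  refine le_iInf fun c => le_iInf fun m => le_iInf fun I => le_iInf fun hI => le_iInf fun hm =>
    le_iInf fun hc => ?_
  unfold Wpre
  refine (iInf_le_of_le c <| iInf_le_of_le m <| iInf_le_of_le (fun _ => 1) <| iInf_le_of_le I <|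
    iInf_le_of_le hI <| iInf_le_of_le hm <| iInf_le_of_le (fun _ _ => one_pos) <|
    iInf_le_of_le ?_ ?_)
  · intro x hx
    obtain ⟨i, hi, hxi⟩ := mem_iUnion₂.1 (hc hx)
    refine le_trans ?_ (ENNReal.le_tsum (⟨i, hi⟩ : I))
    rw [indicator_of_mem]
    · simp
    · intro j hj
      exact (hxi j hj).trans_le hεε
  · refine ENNReal.tsum_le_tsum fun i => ENNReal.ofReal_le_ofReal ?_
    rw [one_mul]
    refine Real.exp_le_exp.2 ?_
    have h1 : sSup (birk f φ (m i) '' bowenBall dist f α (m i) (c i) ε)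
        ≤ (1 + η) * birk f φ (m i) (c i) := by
      refine csSup_le ⟨_, _, self_mem f α _ _ hε, rfl⟩ ?_
      rintro _ ⟨y, hy, rfl⟩
      unfold birk
      rw [Finset.mul_sum]
      refine Finset.sum_le_sum fun j hj => hmod _ _ ?_
      refine lt_of_le_of_lt ?_ (hy j (Finset.mem_range.1 hj))
      exact le_mul_of_one_le_left dist_nonneg (Real.one_le_exp (by positivity))
    have h0 : 0 ≤ birk f φ (m i) (c i) := Finset.sum_nonneg fun j _ => (hφ _).le
    nlinarith [mul_le_mul_of_nonneg_left h1 hs, mul_le_mul_of_nonneg_right hss h0]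

lemma le_sup {X : Type*} [MetricSpace X] [CompactSpace X]
    {f : X → X} (hf : Continuous f) (α : ℝ) {φ : X → ℝ} (hφc : Continuous φ)
    {a : ℝ} (ha : ∀ x, a ≤ φ x) {ε : ℝ} (hε : 0 < ε) (n : ℕ) (x : X) :
    n * a ≤ sSup (birk f φ n '' bowenBall dist f α n x ε) := by
  refine le_trans ?_ (le_csSup (birk_bdd hf hφc n _) ⟨x, self_mem f α n x hε, rfl⟩)
  unfold birk
  calc (n : ℝ) * a = ∑ j ∈ Finset.range n, a := by simp
    _ ≤ _ := Finset.sum_le_sum fun j _ => ha _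

lemma Mpre_le_countable {X : Type*} [MetricSpace X] [CompactSpace X] [Nonempty X]
    {f : X → X} (hf : Continuous f) (K : Set X) (α : ℝ)
    {φ : X → ℝ} (hφc : Continuous φ) {a : ℝ} (ha0 : 0 < a) (ha : ∀ x, a ≤ φ x)
    {s ε : ℝ} (hs : 0 < s) (hε : 0 < ε) (N : ℕ)
    {ι : Type*} [Countable ι] (c : ι → X) (m : ι → ℕ) (hm : ∀ i, N ≤ m i)
    (hc : ∀ x ∈ K, ∃ i, x ∈ bowenBall dist f α (m i) (c i) ε) :
    Mpre dist f φ α s ε N K ≤ ∑' i, ENNReal.ofReal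
      (Real.exp (-s * sSup (birk f φ (m i) '' bowenBall dist f α (m i) (c i) ε))) := by
  rcases isEmpty_or_nonempty ι with h | h
  · have hK : K = ∅ := by
      ext x
      simp only [mem_empty_iff_false, iff_false]
      intro hx
      obtain ⟨i, _⟩ := hc x hx
      exact h.false i
    subst hK
    refine le_trans (le_of_eq ?_) zero_le
    obtain ⟨x0⟩ := ‹Nonempty X›
    have hb : ∀ n ≥ N, Mpre dist f φ α s ε N ∅ ≤ ENNReal.ofReal (Real.exp (-(s * a) * n)) := by
      intro n hn
      unfold Mpre
      refine (iInf_le_of_le (fun _ => x0) <| iInf_le_of_le (fun _ => n) <|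
        iInf_le_of_le {0} <| iInf_le_of_le (by simp) <| iInf_le_of_le (fun _ _ => hn) <|
        iInf_le_of_le (by simp) ?_)
      rw [tsum_singleton (0 : ℕ) (fun _ => ENNReal.ofReal
        (Real.exp (-s * sSup (birk f φ n '' bowenBall dist f α n x0 ε))))]
      refine ENNReal.ofReal_le_ofReal (Real.exp_le_exp.2 ?_)
      nlinarith [mul_le_mul_of_nonneg_left (le_sup hf α hφc ha hε n x0) hs.le]
    have ht : Tendsto (fun n : ℕ => ENNReal.ofReal (Real.exp (-(s * a) * n))) atTop (nhds 0) := by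
      rw [← ENNReal.ofReal_zero]
      refine ENNReal.tendsto_ofReal (Real.tendsto_exp_atBot.comp ?_)
      exact (tendsto_natCast_atTop_atTop).const_mul_atTop_of_neg (by nlinarith)
    exact le_antisymm (ge_of_tendsto ht (eventually_atTop.2 ⟨N, hb⟩)) zero_le
  · obtain ⟨g, hg⟩ := exists_injective_nat ι
    have hl := Function.leftInverse_invFun hg
    unfold Mpre
    refine (iInf_le_of_le (c ∘ Function.invFun g) <| iInf_le_of_le (m ∘ Function.invFun g) <|
      iInf_le_of_le (range g) <| iInf_le_of_le (range_nonempty g) <|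
      iInf_le_of_le (fun _ _ => hm _) <| iInf_le_of_le ?_ ?_)
    · intro x hx
      obtain ⟨i, hi⟩ := hc x hx
      refine mem_iUnion₂.2 ⟨g i, mem_range_self i, ?_⟩
      simpa [hl i] using hi
    · rw [tsum_range (f := fun j => ENNReal.ofReal
        (Real.exp (-s * sSup (birk f φ ((m ∘ Function.invFun g) j) ''
          bowenBall dist f α ((m ∘ Function.invFun g) j) ((c ∘ Function.invFun g) j) ε)))) hg]
      simp [hl _]

lemma exists_max_sep {X : Type*} (R : X → X → Prop) (S : Set X)
    (hR : ∀ x, R x x) (hsymm : ∀ x y, R x y → R y x) :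
    ∃ E ⊆ S, (∀ x ∈ E, ∀ y ∈ E, R x y → x = y) ∧ ∀ x ∈ S, ∃ y ∈ E, R y x := by
  obtain ⟨E, hE⟩ := zorn_subset {E : Set X | E ⊆ S ∧ E.Pairwise (fun x y => ¬ R x y)} (by
    intro c hc hch
    refine ⟨⋃₀ c, ⟨sUnion_subset fun t ht => (hc ht).1, ?_⟩, fun t ht => subset_sUnion_of_mem ht⟩
    exact (pairwise_sUnion hch.directedOn).2 fun t ht => (hc ht).2)
  refine ⟨E, hE.prop.1, fun x hx y hy h => by_contra fun hne => hE.prop.2 hx hy hne h, ?_⟩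
  intro x hx
  by_contra! hcon
  have hx' : x ∈ E := by
    refine hE.le_of_ge (y := insert x E) ⟨insert_subset hx hE.prop.1, ?_⟩ (subset_insert _ _)
      (mem_insert _ _)
    refine hE.prop.2.insert fun y hy _ => ⟨fun h => hcon y hy (hsymm _ _ h), hcon y hy⟩
  exact hcon x hx' (hR x)

lemma M_le_W {X : Type*} [MetricSpace X] [CompactSpace X]
    {f : X → X} (hf : Continuous f) (K : Set X) (α : ℝ)
    {φ : X → ℝ} (hφc : Continuous φ) {a : ℝ} (ha0 : 0 < a) (ha : ∀ x, a ≤ φ x)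
    {s δ ε : ℝ} (hs : 0 ≤ s) (hδ : 0 < δ) (hε : 0 < ε) (N : ℕ)
    (hW : Wpre dist f φ α s ε N K = 0) :
    Mpre dist f φ α (s + δ) (2 * ε) N K = 0 := by
  set r : ℝ := Real.exp (-(δ * a)) with hr
  have hr0 : 0 < r := Real.exp_pos _
  have hr1 : r < 1 := Real.exp_lt_one_iff.2 (by nlinarith [mul_pos hδ ha0])
  have h1r : 0 < 1 - r := by linarith
  set T : ℕ → ℝ≥0∞ := fun n => ENNReal.ofReal ((1 - r) / 2 * r ^ n) with hT
  set C : ℝ≥0∞ := ENNReal.ofReal (2 / (1 - r)) with hC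
  have hTpos : ∀ n, 0 < T n := fun n => ENNReal.ofReal_pos.2 (by positivity)
  have hTsum : ∑' n, T n < 1 := by
    have hh : HasSum (fun n => (1 - r) / 2 * r ^ n) ((1 - r) / 2 * (1 - r)⁻¹) :=
      (hasSum_geometric_of_lt_one hr0.le hr1).mul_left _
    rw [hT, ← ENNReal.ofReal_tsum_of_nonneg (fun n => by positivity) hh.summable, hh.tsum_eq,
      ENNReal.ofReal_lt_one]
    have : (1 - r) / 2 * (1 - r)⁻¹ = 1 / 2 := by field_simp
    rw [this]; norm_num
  have hCT : ∀ n, C * T n = ENNReal.ofReal (r ^ n) := by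
    intro n
    rw [hC, hT, ← ENNReal.ofReal_mul (by positivity)]
    congr 1
    field_simp
  suffices h : Mpre dist f φ α (s + δ) (2 * ε) N K / C ≤ Wpre dist f φ α s ε N K by
    rw [hW, nonpos_iff_eq_zero, ENNReal.div_eq_zero_iff] at h
    exact h.resolve_right ENNReal.ofReal_ne_top
  unfold Wpre
  refine le_iInf fun c => le_iInf fun m => le_iInf fun w => le_iInf fun I => le_iInf fun hI =>
    le_iInf fun hm => le_iInf fun hw => le_iInf fun hc => ?_
  refine ENNReal.div_le_of_le_mul' ?_
  have : Nonempty X := ⟨c 0⟩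
  -- the level sets
  let P : I → ℕ → X → Prop := fun i n y => m i = n ∧ y ∈ bowenBall dist f α (m i) (c i) ε
  let g : ℕ → X → ℝ≥0∞ := fun n y => ∑' i : I, if P i n y then ENNReal.ofReal (w i) else 0
  have hg : ∀ y ∈ K, ∃ n, T n ≤ g n y := by
    intro y hy
    by_contra! hcon
    have h1 : ∑' n, g n y ≤ ∑' n, T n := ENNReal.tsum_le_tsum fun n => (hcon n).le
    have h2 : ∑' n, g n y = ∑' i : I, (bowenBall dist f α (m i) (c i) ε).indicator
        (fun _ => ENNReal.ofReal (w i)) y := by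
      simp only [g]
      rw [ENNReal.tsum_comm]
      refine tsum_congr fun i => ?_
      rw [tsum_eq_single (m i)]
      · simp [P, indicator_apply]
      · intro n hn
        exact if_neg fun h => hn h.1.symm
    exact absurd ((hc y hy).trans (h2 ▸ h1)) (not_le.2 hTsum)
  have hsymm : ∀ n x y, y ∈ bowenBall dist f α n x (2 * ε) →
      x ∈ bowenBall dist f α n y (2 * ε) := by
    intro n x y h i hi
    rw [dist_comm]
    exact h i hi
  have hE := fun n => exists_max_sep (fun x y => y ∈ bowenBall dist f α n x (2 * ε))
    {y | y ∈ K ∧ T n ≤ g n y} (fun x => self_mem f α n x (by positivity)) (hsymm n)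
  choose E hES hEsep hEcov using hE
  let ι := {p : ℕ × X // p.2 ∈ E p.1}
  have hPex : ∀ p : ι, ∃ i : I, P i p.1.1 p.1.2 := by
    intro p
    by_contra! hcon
    have h1 := (hES _ p.2).2
    have h2 : g p.1.1 p.1.2 = 0 := by
      simp only [g]
      rw [ENNReal.tsum_eq_zero]
      exact fun i => if_neg (hcon i)
    rw [h2] at h1
    exact absurd h1 (not_le.2 (hTpos _))
  have hPuniq : ∀ i : I, ∀ p q : ι, P i p.1.1 p.1.2 → P i q.1.1 q.1.2 → p = q := by
    rintro i ⟨⟨n, x⟩, hx⟩ ⟨⟨n', y⟩, hy⟩ ⟨h1, h2⟩ ⟨h3, h4⟩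
    simp only at hx hy h1 h2 h3 h4
    subst h1
    subst h3
    have : x = y := by
      refine hEsep _ x hx y hy fun j hj => ?_
      have := h2 j hj
      have h5 := h4 j hj
      have h6 := mul_le_mul_of_nonneg_left
        (dist_triangle_left (f^[j] x) (f^[j] y) (f^[j] (c i))) (Real.exp_pos (α * j)).le
      linarith
    subst this
    rfl
  choose k hk using hPex
  have : Countable ι := by
    have : Function.Injective k := fun p q h => hPuniq (k p) p q (hk p) (h ▸ hk q)
    exact this.countable
  refine (Mpre_le_countable hf K α hφc ha0 ha (s := s + δ) (by linarith) (by positivity) N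
    (ι := ι) (fun p => p.1.2) (fun p => p.1.1) ?_ ?_).trans ?_
  · intro p
    rw [← (hk p).1]
    exact hm _ (k p).2
  · intro x hx
    obtain ⟨n, hn⟩ := hg x hx
    obtain ⟨y, hy, hyx⟩ := hEcov n x ⟨hx, hn⟩
    exact ⟨⟨(n, y), hy⟩, hyx⟩
  · calc _ ≤ ∑' p : ι, C * ∑' i : I, (if P i p.1.1 p.1.2 then
          ENNReal.ofReal (w i * Real.exp (-s * birk f φ (m i) (c i))) else 0) := by
          refine ENNReal.tsum_le_tsum fun p => ?_
          obtain ⟨⟨n, y⟩, hp⟩ := p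
          simp only
          set S := sSup (birk f φ n '' bowenBall dist f α n y (2 * ε)) with hS
          have hSn : n * a ≤ S := le_sup hf α hφc ha (by positivity) n y
          have h1 : Real.exp (-(s + δ) * S) ≤ r ^ n * Real.exp (-s * S) := by
            rw [hr, ← Real.exp_nat_mul, ← Real.exp_add]
            refine Real.exp_le_exp.2 ?_
            nlinarith [mul_le_mul_of_nonneg_left hSn hδ.le]
          calc ENNReal.ofReal (Real.exp (-(s + δ) * S))
              ≤ ENNReal.ofReal (r ^ n) * ENNReal.ofReal (Real.exp (-s * S)) := by
                rw [← ENNReal.ofReal_mul (by positivity)]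
                exact ENNReal.ofReal_le_ofReal h1
            _ = C * (T n * ENNReal.ofReal (Real.exp (-s * S))) := by rw [← hCT, mul_assoc]
            _ ≤ C * (g n y * ENNReal.ofReal (Real.exp (-s * S))) := by
                gcongr
                exact (hES n hp).2
            _ ≤ _ := by
                gcongr
                simp only [g]
                rw [← ENNReal.tsum_mul_right]
                refine ENNReal.tsum_le_tsum fun i => ?_
                by_cases hP : P i n y
                · rw [if_pos hP, if_pos hP, ← ENNReal.ofReal_mul (hw i i.2).le]
                  refine ENNReal.ofReal_le_ofReal (mul_le_mul_of_nonneg_left ?_ (hw i i.2).le)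
                  refine Real.exp_le_exp.2 ?_
                  have : birk f φ (m i) (c i) ≤ S := by
                    rw [hP.1]
                    refine le_csSup (birk_bdd hf hφc n _) ⟨c i, fun j hj => ?_, rfl⟩
                    rw [dist_comm]
                    have := hP.2 j (hP.1 ▸ hj)
                    linarith
                  nlinarith [mul_le_mul_of_nonneg_left this hs]
                · rw [if_neg hP, if_neg hP, zero_mul]
      _ = C * ∑' i : I, ∑' p : ι, (if P i p.1.1 p.1.2 then
          ENNReal.ofReal (w i * Real.exp (-s * birk f φ (m i) (c i))) else 0) := by
          rw [ENNReal.tsum_mul_left, ENNReal.tsum_comm]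
      _ ≤ _ := by
          gcongr with i
          by_cases h : ∃ p : ι, P i p.1.1 p.1.2
          · obtain ⟨p, hp⟩ := h
            rw [tsum_eq_single p]
            · rw [if_pos hp]
            · intro q hq
              exact if_neg fun h => hq (hPuniq i q p h hp)
          · push Not at h
            rw [ENNReal.tsum_eq_zero.2 fun p => if_neg (h p)]
            exact zero_le

end AlphaBS

/-- the weighted α-BS dimension coincides with the α-BS dimension. -/
theorem stmt9 {X : Type*} [MetricSpace X] [CompactSpace X]
    (f : X → X) (hf : Continuous f) (K : Set X) (α : ℝ) (hα : 0 ≤ α)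
    (φ : X → ℝ) (hφc : Continuous φ) (hφ : ∀ x, 0 < φ x) :
    dimBSW dist f φ α K = dimBS dist f φ α K := by
  obtain ⟨a, ha0, ha⟩ := exists_lb hφc hφ
  refine le_antisymm ?_ ?_
  · refine iSup₂_le fun ε0 hε0 => ?_
    refine EReal.le_of_forall_lt_iff_le.1 fun z hz => ?_
    obtain ⟨z', hz', hzz⟩ := EReal.lt_iff_exists_real_btwn.1 hz
    have hzz : z' < z := EReal.coe_lt_coe_iff.1 hzz
    have key : ∀ ε > 0, ∃ s : ℝ, 0 ≤ s ∧ s < z' ∧ Mlim dist f φ α s ε K = 0 := by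
      intro ε hε
      have h1 : Mcrit dist f φ α ε K < z' :=
        (le_iSup₂ (f := fun ε (_ : 0 < ε) => Mcrit dist f φ α ε K) ε hε).trans_lt hz'
      unfold Mcrit at h1
      simp only [iInf_lt_iff] at h1
      obtain ⟨s, h0, h2, h3⟩ := h1
      exact ⟨s, h0, EReal.coe_lt_coe_iff.1 h3, h2⟩
    have hz0 : 0 < z' := by
      obtain ⟨s, h1, h2, -⟩ := key 1 one_pos
      linarith
    set η := z / z' - 1 with hη
    have hη0 : 0 < η := by
      rw [hη, sub_pos, one_lt_div hz0]; exact hzz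
    obtain ⟨ε1, hε1, hmod⟩ := Metric.uniformContinuous_iff.1
      (CompactSpace.uniformContinuous_of_continuous hφc) (η * a) (by positivity)
    obtain ⟨s, hs0, hsz, hs⟩ := key (min ε0 ε1) (lt_min hε0 hε1)
    unfold Wcrit
    refine iInf_le_of_le z (iInf_le_of_le (by linarith) (iInf_le_of_le ?_ le_rfl))
    unfold Mlim at hs
    unfold Wlim
    rw [← nonpos_iff_eq_zero, ← hs]
    refine iSup_mono fun N => W_le_M f K α hα φ hφ (η := η) hs0 ?_ (lt_min hε0 hε1)
      (min_le_left _ _) ?_ N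
    · calc s * (1 + η) ≤ z' * (1 + η) := by gcongr
        _ = z := by rw [hη]; field_simp; ring
    · intro x y hxy
      have h1 := hmod (hxy.trans_le (min_le_right _ _))
      rw [Real.dist_eq, abs_lt] at h1
      nlinarith [mul_le_mul_of_nonneg_left (ha x) hη0.le]
  · refine iSup₂_le fun ε hε => ?_
    refine le_trans ?_ (le_iSup₂ (f := fun ε (_ : 0 < ε) => Wcrit dist f φ α ε K) (ε / 2)
      (half_pos hε))
    refine le_iInf fun s => le_iInf fun hs => le_iInf fun hW => ?_
    refine EReal.le_of_forall_lt_iff_le.1 fun z hz => ?_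
    have hz : s < z := EReal.coe_lt_coe_iff.1 hz
    unfold Mcrit
    refine iInf_le_of_le z (iInf_le_of_le (by linarith) (iInf_le_of_le ?_ le_rfl))
    unfold Wlim at hW
    unfold Mlim
    rw [ENNReal.iSup_eq_zero] at hW ⊢
    intro N
    have := M_le_W hf K α hφc ha0 ha hs (sub_pos.2 hz) (half_pos hε) N (hW N)
    rwa [add_sub_cancel, mul_div_cancel₀ _ two_ne_zero] at this

end
end

section
/- Let (X,d,f) be a TDS, α ≥ 0, s > 0, n ∈ ℕ, ε > 0, and φ : X → ℝ a positive continuous function. Suppose K is a non-empty compact subset of X and c := W^α(K,s,ε,n,φ) > 0. Then there exists a Borel probability measure μ on X with μ(K) = 1 such that for every x ∈ X and every m ≥ n, μ(B_m^α(x,ε)) ≤ (1/c)·exp(−s·S_mφ(x)). -/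
open Filter Set MeasureTheory ENNReal
open scoped Classical NNReal

noncomputable section

open AlphaBS

/-- weighted covering quantity with arbitrary index type -/
def QW {Y P : Type*} (U : P → Set Y) (e : P → ℝ≥0∞) (g : Y → ℝ) : ℝ≥0∞ :=
  ⨅ (w : P → ℝ≥0∞) (_ : ∀ y, ENNReal.ofReal (g y) ≤ ∑' p, (U p).indicator (fun _ => w p) y),
    ∑' p, w p * e p

lemma QW_le {Y P : Type*} {U : P → Set Y} {e : P → ℝ≥0∞} {g : Y → ℝ} (w : P → ℝ≥0∞)
    (h : ∀ y, ENNReal.ofReal (g y) ≤ ∑' p, (U p).indicator (fun _ => w p) y) :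
    QW U e g ≤ ∑' p, w p * e p := iInf₂_le w h

lemma QW_mono {Y P : Type*} {U : P → Set Y} {e : P → ℝ≥0∞} {g h : Y → ℝ} (H : ∀ y, g y ≤ h y) :
    QW U e g ≤ QW U e h :=
  le_iInf₂ fun w hw => QW_le w fun y => (ENNReal.ofReal_le_ofReal (H y)).trans (hw y)

lemma QW_add {Y P : Type*} {U : P → Set Y} {e : P → ℝ≥0∞} (g h : Y → ℝ) :
    QW U e (fun y => g y + h y) ≤ QW U e g + QW U e h := by
  rw [QW, QW, QW]
  simp only [ENNReal.iInf_add, ENNReal.add_iInf]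
  refine le_iInf₂ fun w hw => le_iInf₂ fun v hv => ?_
  refine (iInf₂_le (fun p => w p + v p) fun y => ?_).trans ?_
  · refine ENNReal.ofReal_add_le.trans ((add_le_add (by first | exact hw y | exact hv y)
      (by first | exact hv y | exact hw y)).trans ?_)
    rw [← ENNReal.tsum_add]
    refine ENNReal.tsum_le_tsum fun p => ?_
    by_cases hy : y ∈ U p <;> simp [hy, add_comm]
  · rw [← ENNReal.tsum_add]
    refine ENNReal.tsum_le_tsum fun p => ?_
    rw [add_mul, add_comm]

lemma QW_smul_le {Y P : Type*} {U : P → Set Y} {e : P → ℝ≥0∞} (g : Y → ℝ) (c : ℝ) (hc : 0 < c) :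
    QW U e (fun y => c * g y) ≤ ENNReal.ofReal c * QW U e g := by
  have h0 : ENNReal.ofReal c ≠ 0 := by simpa using hc
  conv_rhs => rw [QW]
  simp only [ENNReal.mul_iInf_of_ne h0 ENNReal.ofReal_ne_top]
  refine le_iInf₂ fun w hw => ?_
  refine (QW_le (fun p => ENNReal.ofReal c * w p) fun y => ?_).trans ?_
  · rw [ENNReal.ofReal_mul hc.le]
    refine (mul_le_mul_right (hw y) _).trans ?_
    rw [← ENNReal.tsum_mul_left]
    refine ENNReal.tsum_le_tsum fun p => ?_
    by_cases hy : y ∈ U p <;> simp [hy]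
  · rw [← ENNReal.tsum_mul_left]
    refine ENNReal.tsum_le_tsum fun p => ?_
    rw [mul_assoc]

lemma QW_smul {Y P : Type*} {U : P → Set Y} {e : P → ℝ≥0∞} (g : Y → ℝ) (c : ℝ) (hc : 0 < c) :
    QW U e (fun y => c * g y) = ENNReal.ofReal c * QW U e g := by
  refine le_antisymm (QW_smul_le g c hc) ?_
  have h := QW_smul_le (U := U) (e := e) (fun y => c * g y) c⁻¹ (inv_pos.2 hc)
  simp only [inv_mul_cancel_left₀ hc.ne'] at h
  refine (mul_le_mul_right h _).trans ?_
  rw [← mul_assoc, ← ENNReal.ofReal_mul hc.le, mul_inv_cancel₀ hc.ne']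
  simp

lemma QW_nonpos {Y P : Type*} {U : P → Set Y} {e : P → ℝ≥0∞} (g : Y → ℝ) (hg : ∀ y, g y ≤ 0) :
    QW U e g = 0 := by
  refine le_antisymm ((QW_le (fun _ => 0) fun y => ?_).trans ?_) bot_le
  · simp [ENNReal.ofReal_of_nonpos (hg y)]
  · simp

lemma QW_ind {Y P : Type*} {U : P → Set Y} {e : P → ℝ≥0∞} (g : Y → ℝ) (p : P)
    (hg : ∀ y, g y ≤ 1) (hg0 : ∀ y, y ∉ U p → g y ≤ 0) :
    QW U e g ≤ e p := by
  refine (QW_le (Pi.single p 1) fun y => ?_).trans ?_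
  · by_cases hy : y ∈ U p
    · refine le_trans ?_ (ENNReal.le_tsum p)
      simpa [hy] using hg y
    · simp [ENNReal.ofReal_of_nonpos (hg0 y hy)]
  · rw [tsum_eq_single p]
    · simp
    · intro q hq
      simp [Pi.single_eq_of_ne hq]

open scoped CompactlySupported in
lemma frostman_aux {Y P : Type*} [TopologicalSpace Y] [T2Space Y] [CompactSpace Y] [Nonempty Y]
    [MeasurableSpace Y] [BorelSpace Y] (U : P → Set Y) (hU : ∀ p, IsOpen (U p))
    (e : P → ℝ≥0∞) (h0 : QW U e (fun _ => 1) ≠ 0)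
    (ht : QW U e (fun _ => 1) ≠ ⊤) :
    ∃ ν : Measure Y, IsProbabilityMeasure ν ∧
      ∀ p, ν (U p) ≤ (QW U e (fun _ => 1))⁻¹ * e p := by
  set C := QW U e (fun _ => 1) with hC
  have hCpos : 0 < C.toReal := ENNReal.toReal_pos h0 ht
  let one : C_c(Y, ℝ) := CompactlySupportedContinuousMap.continuousMapEquiv 1
  have one_apply : ∀ y, one y = 1 := fun y => rfl
  have hone : one ≠ 0 := by
    intro h
    obtain ⟨y⟩ := ‹Nonempty Y›
    have := DFunLike.congr_fun h y
    rw [one_apply] at this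
    simp at this
  have hfin : ∀ g : C_c(Y, ℝ), QW U e g ≠ ⊤ := by
    intro g
    obtain ⟨M, hM⟩ := (isCompact_range (map_continuous g)).bddAbove
    have hb : ∀ y, g y ≤ max M 1 * 1 := fun y => by
      rw [mul_one]; exact (hM ⟨y, rfl⟩).trans (le_max_left _ _)
    refine ne_top_of_le_ne_top ?_ (QW_mono hb)
    rw [QW_smul _ _ (by positivity)]
    exact ENNReal.mul_ne_top ENNReal.ofReal_ne_top ht
  let N : C_c(Y, ℝ) → ℝ := fun g => (QW U e g).toReal
  obtain ⟨L, hL1, hL2⟩ := exists_extension_of_le_sublinear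
    (LinearPMap.mkSpanSingleton one C.toReal hone) N
    (by
      intro c hc g
      have := QW_smul (U := U) (e := e) g c hc
      change (QW U e (fun y => c * g y)).toReal = _
      rw [this, ENNReal.toReal_mul, ENNReal.toReal_ofReal hc.le])
    (by
      intro g h
      have := QW_add (U := U) (e := e) g h
      change (QW U e (fun y => g y + h y)).toReal ≤ _
      rw [← ENNReal.toReal_add (hfin g) (hfin h)]
      exact ENNReal.toReal_mono (ENNReal.add_ne_top.2 ⟨hfin g, hfin h⟩) this)
    (by
      rintro ⟨x, hx⟩
      obtain ⟨t, rfl⟩ := Submodule.mem_span_singleton.1 hx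
      rw [LinearPMap.mkSpanSingleton'_apply]
      rcases le_or_gt t 0 with h | h
      · refine le_trans ?_ ENNReal.toReal_nonneg
        exact mul_nonpos_of_nonpos_of_nonneg h hCpos.le
      · have := QW_smul (U := U) (e := e) (fun _ => 1) t h
        change t * C.toReal ≤ (QW U e (fun y => t * 1)).toReal
        rw [this, ENNReal.toReal_mul, ENNReal.toReal_ofReal h.le])
  have hLone : L one = C.toReal := by
    have := hL1 ⟨one, Submodule.mem_span_singleton_self one⟩
    rw [LinearPMap.mkSpanSingleton_apply] at this
    exact this
  have hmono : Monotone L := by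
    intro g h hgh
    have h1 := hL2 (g - h)
    have h2 : N (g - h) = 0 := by
      change (QW U e _).toReal = 0
      rw [QW_nonpos]
      · simp
      · intro y
        have : g y ≤ h y := hgh y
        simpa using this
    rw [h2, map_sub] at h1
    linarith
  let Λ : C_c(Y, ℝ) →ₚ[ℝ] ℝ := PositiveLinearMap.mk L hmono
  have hΛ : ∀ g, Λ g = L g := fun g => rfl
  let μ := RealRMK.rieszMeasure Λ
  have hμ : μ univ = C := by
    apply le_antisymm
    · have := RealRMK.rieszMeasure_le_of_eq_one Λ (f := one) (K := univ)
        (fun x => by rw [one_apply]; norm_num) isCompact_univ (fun x _ => one_apply x)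
      rwa [hΛ, hLone, ENNReal.ofReal_toReal ht] at this
    · have := RealRMK.le_rieszMeasure_tsupport_subset Λ (f := one) (V := univ)
        (fun x => by rw [one_apply]; norm_num) (subset_univ _)
      rwa [hΛ, hLone, ENNReal.ofReal_toReal ht] at this
  have hball : ∀ p, μ (U p) ≤ e p := by
    intro p
    have : (RealRMK.rieszMeasure Λ).Regular := inferInstance
    change RealRMK.rieszMeasure Λ (U p) ≤ _
    rw [(hU p).measure_eq_iSup_isCompact]
    refine iSup₂_le fun A hA => iSup_le fun hAc => ?_
    obtain ⟨g, hg0, hg1, hg⟩ := exists_continuous_zero_one_of_isClosed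
      (hU p).isClosed_compl hAc.isClosed (by
        rw [disjoint_compl_left_iff_subset]; exact hA)
    let g' : C_c(Y, ℝ) := CompactlySupportedContinuousMap.continuousMapEquiv g
    have hg' : ∀ y, g' y = g y := fun y => rfl
    refine (RealRMK.rieszMeasure_le_of_eq_one Λ (f := g')
      (fun x => by rw [hg']; exact (hg x).1) hAc (fun x hx => by rw [hg']; exact hg1 hx)).trans ?_
    rw [hΛ]
    refine (ENNReal.ofReal_le_ofReal (hL2 g')).trans ?_
    rw [ENNReal.ofReal_toReal (hfin g')]
    refine QW_ind _ p (fun y => (hg y).2) fun y hy => ?_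
    exact le_of_eq (hg0 hy)
  refine ⟨C⁻¹ • μ, ⟨?_⟩, fun p => ?_⟩
  · rw [Measure.smul_apply, hμ, smul_eq_mul, ENNReal.inv_mul_cancel h0 ht]
  · rw [Measure.smul_apply, smul_eq_mul]
    exact mul_le_mul_right (hball p) _

lemma isOpen_bowenBall {X : Type*} [MetricSpace X] {f : X → X} (hf : Continuous f) (α : ℝ) (m : ℕ)
    (x : X) (ε : ℝ) : IsOpen (bowenBall dist f α m x ε) := by
  have : bowenBall dist f α m x ε =
      ⋂ i ∈ Finset.range m, {y | Real.exp (α * i) * dist (f^[i] x) (f^[i] y) < ε} := by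
    ext y; simp [bowenBall]
  rw [this]
  refine isOpen_biInter_finset fun i _ => isOpen_lt ?_ continuous_const
  have := hf.iterate i
  fun_prop

lemma Wpre_le_QW {X : Type*} [MetricSpace X] (f : X → X) (α s : ℝ) (n : ℕ) (ε : ℝ)
    (φ : X → ℝ) (K : Set X) (hKne : K.Nonempty) :
    Wpre dist f φ α s ε n K ≤ QW (Y := K) (P := X × {m : ℕ // n ≤ m})
      (fun p => Subtype.val ⁻¹' bowenBall dist f α p.2 p.1 ε)
      (fun p => ENNReal.ofReal (Real.exp (-s * birk f φ p.2 p.1))) (fun _ => 1) := by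
  refine le_iInf₂ fun w hw => ?_
  by_cases htop : ∑' p : X × {m : ℕ // n ≤ m},
      w p * ENNReal.ofReal (Real.exp (-s * birk f φ p.2 p.1)) = ⊤
  · rw [htop]; exact le_top
  have hepos : ∀ p : X × {m : ℕ // n ≤ m},
      ENNReal.ofReal (Real.exp (-s * birk f φ p.2 p.1)) ≠ 0 := fun p => by
    simpa using Real.exp_pos _
  have hwt : ∀ p, w p ≠ ⊤ := by
    intro p h
    have := ENNReal.ne_top_of_tsum_ne_top htop p
    rw [h, ENNReal.top_mul (hepos p)] at this
    exact this rfl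
  set S := Function.support w with hS
  have hcount : S.Countable := by
    have := Summable.countable_support_ennreal htop
    refine this.mono fun p hp => ?_
    simp only [Function.mem_support] at hp ⊢
    exact mul_ne_zero hp (hepos p)
  obtain ⟨k0, hk0⟩ := hKne
  have hSne : S.Nonempty := by
    by_contra h
    rw [Set.not_nonempty_iff_eq_empty, hS, Function.support_eq_empty_iff] at h
    have := hw ⟨k0, hk0⟩
    simp [h] at this
  have : Countable S := hcount.to_subtype
  obtain ⟨j, hj⟩ := exists_injective_nat S
  obtain ⟨p0, hp0⟩ := hSne
  have : Nonempty S := ⟨⟨p0, hp0⟩⟩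
  let r : ℕ → S := Function.invFun j
  have hr : ∀ q, r (j q) = q := Function.leftInverse_invFun hj
  let E : S ≃ Set.range j := Equiv.ofInjective j hj
  have hE : ∀ q, r (E q) = q := hr
  have hsum : ∀ F : S → ℝ≥0∞, ∑' i : Set.range j, F (r i) = ∑' q : S, F q := by
    intro F
    rw [← E.tsum_eq]
    simp only [hE]
  have hsub : ∀ F : X × {m : ℕ // n ≤ m} → ℝ≥0∞, (∀ p, w p = 0 → F p = 0) →
      ∑' q : S, F q = ∑' p, F p := by
    intro F hF
    refine tsum_subtype_eq_of_support_subset fun p hp => ?_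
    intro h
    exact hp (hF p h)
  unfold Wpre
  refine iInf_le_of_le (fun i => (r i).1.1) <| iInf_le_of_le (fun i => ((r i).1.2 : ℕ)) <|
    iInf_le_of_le (fun i => (w (r i)).toReal) <| iInf_le_of_le (Set.range j) <|
    iInf_le_of_le ⟨j ⟨p0, hp0⟩, ⟨p0, hp0⟩, rfl⟩ <| iInf_le_of_le (fun i _ => (r i).1.2.2) <|
    iInf_le_of_le (fun i _ => ENNReal.toReal_pos (r i).2 (hwt _)) <|
    iInf_le_of_le ?_ ?_
  · intro x hx
    have h1 := hw ⟨x, hx⟩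
    rw [ENNReal.ofReal_one] at h1
    refine h1.trans (le_of_eq ?_)
    simp only [ENNReal.ofReal_toReal (hwt _)]
    rw [hsum (fun q => (bowenBall dist f α q.1.2 q.1.1 ε).indicator (fun _ => w q) x),
      hsub (fun q => (bowenBall dist f α q.2 q.1 ε).indicator (fun _ => w q) x)]
    · rfl
    · intro p hp; simp [hp]
  · refine le_of_eq ?_
    simp only [ENNReal.ofReal_mul ENNReal.toReal_nonneg, ENNReal.ofReal_toReal (hwt _)]
    rw [hsum (fun q => w q * ENNReal.ofReal (Real.exp (-s * birk f φ q.1.2 q.1.1))),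
      hsub (fun q => w q * ENNReal.ofReal (Real.exp (-s * birk f φ q.2 q.1)))]
    intro p hp; simp [hp]

/-- dynamical Frostman lemma: if `c := W^α(K,s,ε,n,φ) > 0` then there is a
Borel probability measure `μ` with `μ(K) = 1` and
`μ(B_m^α(x,ε)) ≤ (1/c)·exp(-s·S_mφ(x))` for all `x` and all `m ≥ n`. -/
theorem stmt10 {X : Type*} [MetricSpace X] [CompactSpace X]
    [MeasurableSpace X] [BorelSpace X]
    (f : X → X) (hf : Continuous f) (α : ℝ) (hα : 0 ≤ α)
    (s : ℝ) (hs : 0 < s) (n : ℕ) (ε : ℝ) (hε : 0 < ε)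
    (φ : X → ℝ) (hφc : Continuous φ) (hφ : ∀ x, 0 < φ x)
    (K : Set X) (hK : IsCompact K) (hKne : K.Nonempty)
    (hc : 0 < Wpre dist f φ α s ε n K) :
    ∃ μ : Measure X, IsProbabilityMeasure μ ∧ μ K = 1 ∧
      ∀ x : X, ∀ m : ℕ, n ≤ m →
        μ (bowenBall dist f α m x ε) ≤
          (Wpre dist f φ α s ε n K)⁻¹ * ENNReal.ofReal (Real.exp (-s * birk f φ m x)) := by
  have : CompactSpace K := isCompact_iff_compactSpace.1 hK
  have : Nonempty K := hKne.to_subtype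
  let U : X × {m : ℕ // n ≤ m} → Set K := fun p => Subtype.val ⁻¹' bowenBall dist f α p.2 p.1 ε
  let e : X × {m : ℕ // n ≤ m} → ℝ≥0∞ :=
    fun p => ENNReal.ofReal (Real.exp (-s * birk f φ p.2 p.1))
  have hle : Wpre dist f φ α s ε n K ≤ QW U e (fun _ => 1) := Wpre_le_QW f α s n ε φ K hKne
  have hU : ∀ p, IsOpen (U p) := fun p =>
    (isOpen_bowenBall hf α p.2 p.1 ε).preimage continuous_subtype_val
  have hfin : QW U e (fun _ => 1) ≠ ⊤ := by
    obtain ⟨t, ht⟩ := isCompact_univ.elim_finite_subcover (fun x : K => U (x.1, ⟨n, le_rfl⟩))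
      (fun x => hU _) (fun x _ => mem_iUnion.2 ⟨x, by simp [U, bowenBall, hε]⟩)
    let T : Finset (X × {m : ℕ // n ≤ m}) := t.image fun x : K => (x.1, ⟨n, le_rfl⟩)
    refine ne_top_of_le_ne_top ?_ (QW_le (fun p => if p ∈ T then 1 else 0) fun y => ?_)
    · rw [tsum_eq_sum (s := T) (fun p hp => by simp [hp])]
      refine ENNReal.sum_ne_top.2 fun p hp => ?_
      simp [hp, e]
    · obtain ⟨x, hx, hy⟩ := mem_iUnion₂.1 (ht (mem_univ y))
      refine le_trans ?_ (ENNReal.le_tsum (x.1, ⟨n, le_rfl⟩))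
      have hm : ((x.1, ⟨n, le_rfl⟩) : X × {m : ℕ // n ≤ m}) ∈ T := Finset.mem_image_of_mem _ hx
      rw [Set.indicator_of_mem hy, if_pos hm]
      simp
  obtain ⟨ν, hν, hb⟩ := frostman_aux U hU e (hc.trans_le hle).ne' hfin
  have hval : Measurable (Subtype.val : K → X) := measurable_subtype_coe
  refine ⟨ν.map Subtype.val, Measure.isProbabilityMeasure_map hval.aemeasurable, ?_, ?_⟩
  · rw [Measure.map_apply hval hK.isClosed.measurableSet]
    simp
  · intro x m hm
    rw [Measure.map_apply hval (isOpen_bowenBall hf α m x ε).measurableSet]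
    exact (hb (x, ⟨m, hm⟩)).trans (mul_le_mul_left (ENNReal.inv_le_inv.2 hle) _)

end
end

section
/- Let (X,d,f) be a TDS and φ ∈ C(X,ℝ) with φ > 0. Let K ⊆ X be a non-empty compact subset. Then for every α ≥ 0, dim_BS^α(f,K,φ) = sup{P_μ^α(f,φ) : μ a Borel probability measure on X with μ(K) = 1}. -/
open Filter Set MeasureTheory ENNReal
open scoped Classical NNReal

noncomputable section

open AlphaBS



theorem riesz_aux {Y : Type*} [MetricSpace Y] [CompactSpace Y] [MeasurableSpace Y] [BorelSpace Y]
    (L : C(Y, ℝ) →ₗ[ℝ] ℝ) (hpos : ∀ g : C(Y, ℝ), 0 ≤ g → 0 ≤ L g) (h1 : L 1 = 1) :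
    ∃ ν : Measure Y, IsProbabilityMeasure ν ∧ ∀ (U : Set Y), IsOpen U → ∀ a : ℝ,
      (∀ g : C(Y, ℝ), (∀ x, g x ≤ U.indicator (fun _ => (1:ℝ)) x) → L g ≤ a) →
      ν U ≤ ENNReal.ofReal a := by
  let Λ₀ : CompactlySupportedContinuousMap Y ℝ →ₗ[ℝ] ℝ :=
    { toFun := fun f => L f.toContinuousMap
      map_add' := fun f g => by
        rw [← map_add]; rfl
      map_smul' := fun c f => by
        rw [← map_smul]; rfl }
  let Λ : CompactlySupportedContinuousMap Y ℝ →ₚ[ℝ] ℝ :=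
    PositiveLinearMap.mk₀ Λ₀ (fun f hf => hpos _ (fun x => hf x))
  have hΛ : ∀ g : C(Y, ℝ), Λ (CompactlySupportedContinuousMap.continuousMapEquiv g) = L g :=
    fun g => rfl
  refine ⟨RealRMK.rieszMeasure Λ, ⟨?_⟩, ?_⟩
  · apply le_antisymm
    · have := RealRMK.rieszMeasure_le_of_eq_one Λ
        (f := CompactlySupportedContinuousMap.continuousMapEquiv (1 : C(Y, ℝ)))
        (fun x => zero_le_one) (K := univ) isCompact_univ (fun x _ => rfl)
      rw [hΛ, h1] at this
      simpa using this
    · have := RealRMK.le_rieszMeasure_tsupport_subset Λ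
        (f := CompactlySupportedContinuousMap.continuousMapEquiv (1 : C(Y, ℝ)))
        (fun x => ⟨zero_le_one, le_rfl⟩) (V := univ) (subset_univ _)
      rw [hΛ, h1] at this
      simpa using this
  · intro U hU a ha
    have : (RealRMK.rieszMeasure Λ).Regular := inferInstance
    rw [hU.measure_eq_iSup_isCompact]
    refine iSup₂_le fun C hCU => iSup_le fun hC => ?_
    obtain ⟨g, hg1, hg0, -, hg⟩ := exists_continuous_one_zero_of_isCompact hC hU.isClosed_compl
      (disjoint_compl_right_iff_subset.mpr hCU)
    have := RealRMK.rieszMeasure_le_of_eq_one Λ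
        (f := CompactlySupportedContinuousMap.continuousMapEquiv g)
        (fun x => (hg x).1) (K := C) hC (fun x hx => hg1 hx)
    rw [hΛ] at this
    refine this.trans (ENNReal.ofReal_le_ofReal (ha g fun x => ?_))
    by_cases hx : x ∈ U
    · simpa [hx] using (hg x).2
    · simpa [hx] using (hg0 hx).le

theorem frostman_abs {Y : Type*} [MetricSpace Y] [CompactSpace Y] [Nonempty Y]
    [MeasurableSpace Y] [BorelSpace Y]
    {ι : Type*} (U : ι → Set Y) (hU : ∀ i, IsOpen (U i)) (hcov : ⋃ i, U i = univ)
    (a : ι → ℝ) (ha : ∀ i, 0 ≤ a i)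
    (hw : ∀ w : ι →₀ ℝ, (∀ i, 0 ≤ w i) →
      (∀ y, 1 ≤ Finsupp.linearCombination ℝ (fun i => (U i).indicator (fun _ => (1:ℝ)) y) w) →
      1 ≤ Finsupp.linearCombination ℝ a w) :
    ∃ ν : Measure Y, IsProbabilityMeasure ν ∧ ∀ i, ν (U i) ≤ ENNReal.ofReal (a i) := by
  let ev : Y → (ι →₀ ℝ) →ₗ[ℝ] ℝ := fun y =>
    Finsupp.linearCombination ℝ (fun i => (U i).indicator (fun _ => (1:ℝ)) y)
  let co : (ι →₀ ℝ) →ₗ[ℝ] ℝ := Finsupp.linearCombination ℝ a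
  let T : C(Y, ℝ) → Set ℝ := fun g =>
    {r | ∃ w : ι →₀ ℝ, (∀ i, 0 ≤ w i) ∧ (∀ y, g y ≤ ev y w) ∧ co w = r}
  have co_nonneg : ∀ w : ι →₀ ℝ, (∀ i, 0 ≤ w i) → 0 ≤ co w := by
    intro w hw
    simp only [co, Finsupp.linearCombination_apply]
    exact Finset.sum_nonneg fun i _ => mul_nonneg (hw i) (ha i)
  have ev_nonneg : ∀ y, ∀ w : ι →₀ ℝ, (∀ i, 0 ≤ w i) → 0 ≤ ev y w := by
    intro y w hw
    simp only [ev, Finsupp.linearCombination_apply]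
    exact Finset.sum_nonneg fun i _ => mul_nonneg (hw i)
      (indicator_nonneg (fun _ _ => zero_le_one) _)
  have T0 : ∀ g, ∀ r ∈ T g, 0 ≤ r := by
    rintro g r ⟨w, hw, -, rfl⟩; exact co_nonneg w hw
  have Tbdd : ∀ g, BddBelow (T g) := fun g => ⟨0, fun r hr => T0 g r hr⟩
  have Tne : ∀ g, (T g).Nonempty := by
    intro g
    obtain ⟨t, ht⟩ := isCompact_univ.elim_finite_subcover U hU hcov.ge
    refine ⟨_, ∑ i ∈ t, Finsupp.single i ‖g‖, ?_, ?_, rfl⟩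
    · intro i
      rw [Finsupp.finsetSum_apply]
      refine Finset.sum_nonneg fun j _ => ?_
      rw [Finsupp.single_apply]; split_ifs <;> simp
    · intro y
      obtain ⟨i, hi, hy⟩ := mem_iUnion₂.1 (ht (mem_univ y))
      have : ev y (Finsupp.single i ‖g‖) ≤ ev y (∑ i ∈ t, Finsupp.single i ‖g‖) := by
        rw [map_sum]
        refine Finset.single_le_sum (f := fun i => ev y (Finsupp.single i ‖g‖))
          (fun j _ => ?_) hi
        simp only [ev, Finsupp.linearCombination_single]
        exact mul_nonneg (norm_nonneg _) (indicator_nonneg (fun _ _ => zero_le_one) _)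
      refine le_trans ?_ this
      simp only [ev, Finsupp.linearCombination_single, indicator_of_mem hy, smul_eq_mul, mul_one]
      exact (le_abs_self _).trans (g.norm_coe_le_norm y)
  let p : C(Y, ℝ) → ℝ := fun g => sInf (T g)
  have p_le : ∀ g (w : ι →₀ ℝ), (∀ i, 0 ≤ w i) → (∀ y, g y ≤ ev y w) → p g ≤ co w :=
    fun g w h1 h2 => csInf_le (Tbdd g) ⟨w, h1, h2, rfl⟩
  have p0 : ∀ g, 0 ≤ p g := fun g => le_csInf (Tne g) (T0 g)
  have p1 : 1 ≤ p 1 := le_csInf (Tne 1) (by rintro r ⟨w, h1, h2, rfl⟩; exact hw w h1 h2)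
  have p_add : ∀ g h, p (g + h) ≤ p g + p h := by
    intro g h
    rw [← sub_le_iff_le_add']
    refine le_csInf (Tne h) ?_
    rintro r ⟨w, h1, h2, rfl⟩
    rw [sub_le_comm]
    refine le_csInf (Tne g) ?_
    rintro r ⟨v, h3, h4, rfl⟩
    rw [sub_le_iff_le_add, ← map_add]
    refine p_le _ _ (fun i => add_nonneg (h3 i) (h1 i)) fun y => ?_
    rw [map_add]
    exact add_le_add (h4 y) (h2 y)
  have p_hom' : ∀ c : ℝ, 0 < c → ∀ g, p (c • g) ≤ c * p g := by
    intro c hc g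
    rw [← div_le_iff₀' hc]
    refine le_csInf (Tne g) ?_
    rintro r ⟨w, h1, h2, rfl⟩
    rw [div_le_iff₀' hc, ← smul_eq_mul, ← map_smul]
    refine p_le _ _ (fun i => mul_nonneg hc.le (h1 i)) fun y => ?_
    rw [map_smul]
    exact mul_le_mul_of_nonneg_left (h2 y) hc.le
  have p_hom : ∀ c : ℝ, 0 < c → ∀ g, p (c • g) = c * p g := by
    intro c hc g
    refine le_antisymm (p_hom' c hc g) ?_
    have := p_hom' c⁻¹ (inv_pos.2 hc) (c • g)
    rw [inv_smul_smul₀ hc.ne', inv_mul_eq_div, le_div_iff₀' hc] at this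
    exact this
  have hone : (1 : C(Y, ℝ)) ≠ 0 := one_ne_zero
  obtain ⟨L, hL1, hL2⟩ := exists_extension_of_le_sublinear
    (LinearPMap.mkSpanSingleton (1 : C(Y, ℝ)) (1:ℝ) hone) p p_hom p_add (by
      rintro ⟨x, hx⟩
      obtain ⟨c, rfl⟩ := Submodule.mem_span_singleton.1 hx
      rw [LinearPMap.mkSpanSingleton'_apply]
      simp only [RingHom.id_apply, smul_eq_mul, mul_one]
      rcases le_or_gt c 0 with hc | hc
      · exact hc.trans (p0 _)
      · rw [p_hom c hc]; nlinarith)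
  have hL : L 1 = 1 := by
    have := hL1 ⟨1, Submodule.mem_span_singleton_self _⟩
    rw [LinearPMap.mkSpanSingleton_apply] at this
    exact this
  obtain ⟨ν, hν, hν2⟩ := riesz_aux L (by
    intro g hg
    have h1 := hL2 (-g)
    have h2 := p_le (-g) 0 (fun i => le_rfl) (fun y => by simpa using hg y)
    rw [map_neg] at h1
    rw [map_zero] at h2
    linarith) hL
  refine ⟨ν, hν, fun i => hν2 (U i) (hU i) (a i) fun g hg => (hL2 g).trans ?_⟩
  have := p_le g (Finsupp.single i 1) (fun j => by
    rw [Finsupp.single_apply]; split_ifs <;> simp) (fun y => by simpa [ev] using hg y)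
  simpa [co] using this

theorem comb {ι : Type*} (t : ℝ) (ht : 0 < t) (w a : ι → ℝ) (hw : ∀ i, 0 ≤ w i)
    (ha : ∀ i, 0 ≤ a i) (I : Finset ι) : ∀ F : Set (Finset ι),
      (∀ A ∈ F, A ⊆ I ∧ t ≤ ∑ i ∈ A, w i) →
      ∃ J ⊆ I, t * ∑ j ∈ J, a j ≤ ∑ i ∈ I, w i * a i ∧
        ∀ A ∈ F, ∃ B ∈ F, (A ∩ B).Nonempty ∧ ∃ j ∈ J, j ∈ B := by
  induction I using Finset.strongInduction with
  | H I ih =>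
  intro F hF
  rcases F.eq_empty_or_nonempty with rfl | ⟨B, hB⟩
  · exact ⟨∅, by simp, by simpa using Finset.sum_nonneg fun i _ => mul_nonneg (hw i) (ha i),
      by simp⟩
  have hne : ∀ A ∈ F, A.Nonempty := by
    intro A hA
    rw [Finset.nonempty_iff_ne_empty]
    rintro rfl
    have := (hF _ hA).2
    simp at this
    linarith
  obtain ⟨j, hj, hmin⟩ := B.exists_min_image a (hne B hB)
  have hBI := (hF B hB).1
  have hss : I \ B ⊂ I := Finset.sdiff_ssubset hBI (hne B hB)
  obtain ⟨J, hJI, hJ, hJF⟩ := ih _ hss {A ∈ F | Disjoint A B} (by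
    rintro A ⟨hA, hd⟩
    exact ⟨Finset.subset_sdiff.2 ⟨(hF A hA).1, hd⟩, (hF A hA).2⟩)
  have hjJ : j ∉ J := fun h => (Finset.mem_sdiff.1 (hJI h)).2 hj
  refine ⟨insert j J, ?_, ?_, ?_⟩
  · exact Finset.insert_subset (hBI hj) (hJI.trans Finset.sdiff_subset)
  · rw [Finset.sum_insert hjJ, ← Finset.sum_sdiff hBI]
    have h1 : t * a j ≤ ∑ i ∈ B, w i * a i := by
      calc t * a j ≤ (∑ i ∈ B, w i) * a j := mul_le_mul_of_nonneg_right (hF B hB).2 (ha j)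
        _ = ∑ i ∈ B, w i * a j := Finset.sum_mul _ _ _
        _ ≤ _ := Finset.sum_le_sum fun i hi => mul_le_mul_of_nonneg_left (hmin i hi) (hw i)
    linarith
  · intro A hA
    by_cases hd : Disjoint A B
    · obtain ⟨B', hB', h1, k, hk, hk2⟩ := hJF A ⟨hA, hd⟩
      exact ⟨B', hB'.1, h1, k, Finset.mem_insert_of_mem hk, hk2⟩
    · exact ⟨B, hB, Finset.not_disjoint_iff_nonempty_inter.1 hd, j, Finset.mem_insert_self _ _, hj⟩

section
variable {X : Type*} [MetricSpace X]

theorem ball_three (f : X → X) (α ε : ℝ) (n : ℕ) (x y a b : X)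
    (h1 : x ∈ bowenBall dist f α n a ε) (h2 : y ∈ bowenBall dist f α n a ε)
    (h3 : y ∈ bowenBall dist f α n b ε) : x ∈ bowenBall dist f α n b (3 * ε) := by
  intro i hi
  have e := Real.exp_pos (α * i)
  have h1 := h1 i hi
  have h2 := h2 i hi
  have h3 := h3 i hi
  have t := dist_triangle4 (f^[i] b) (f^[i] y) (f^[i] a) (f^[i] x)
  rw [dist_comm (f^[i] y)] at t
  nlinarith

theorem weighted_cover (f : X → X) (φ : X → ℝ) (α ε s s' m : ℝ) (K : Set X)
    (hm : ∀ n x, n * m ≤ birk f φ n x) (hs : s ≤ s') (N : ℕ)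
    (hN : ∀ S : Finset ℕ, (∀ n ∈ S, N ≤ n) → ∑ n ∈ S, Real.exp (-(s' - s) * m) ^ n < 1)
    (w : {p : X × ℕ // N ≤ p.2} →₀ ℝ) (hw : ∀ i, 0 ≤ w i)
    (hcov : ∀ x ∈ K, 1 ≤ Finsupp.linearCombination ℝ
      (fun p : {p : X × ℕ // N ≤ p.2} =>
        (bowenBall dist f α p.1.2 p.1.1 ε).indicator (fun _ => (1:ℝ)) x) w) :
    ∃ J : Finset {p : X × ℕ // N ≤ p.2},
      (K ⊆ ⋃ j ∈ J, bowenBall dist f α j.1.2 j.1.1 (3 * ε)) ∧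
      ∑ j ∈ J, Real.exp (-s' * birk f φ j.1.2 j.1.1) ≤
        Finsupp.linearCombination ℝ
          (fun p : {p : X × ℕ // N ≤ p.2} => Real.exp (-s * birk f φ p.1.2 p.1.1)) w := by
  set r := Real.exp (-(s' - s) * m) with hr
  set a : {p : X × ℕ // N ≤ p.2} → ℝ := fun p => Real.exp (-s * birk f φ p.1.2 p.1.1) with ha
  have hr0 : 0 < r := Real.exp_pos _
  let I : ℕ → Finset {p : X × ℕ // N ≤ p.2} := fun n => w.support.filter (fun p => p.1.2 = n)
  let A : ℕ → X → Finset {p : X × ℕ // N ≤ p.2} := fun n x =>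
    (I n).filter (fun p => x ∈ bowenBall dist f α p.1.2 p.1.1 ε)
  let F : ℕ → Set (Finset {p : X × ℕ // N ≤ p.2}) := fun n =>
    {B | ∃ x ∈ K, B = A n x ∧ r ^ n ≤ ∑ i ∈ B, w i}
  have key := fun n => comb (r ^ n) (pow_pos hr0 n) w a hw (fun i => (Real.exp_pos _).le) (I n) (F n)
    (by rintro B ⟨x, hx, rfl, h⟩; exact ⟨Finset.filter_subset _ _, h⟩)
  choose J hJI hJ hJF using key
  let S : Finset ℕ := w.support.image (fun p => p.1.2)
  have hmap : ∀ p ∈ w.support, p.1.2 ∈ S := fun p hp =>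
    Finset.mem_image_of_mem (fun p : {p : X × ℕ // N ≤ p.2} => p.1.2) hp
  refine ⟨S.biUnion J, ?_, ?_⟩
  · intro x hx
    have h1 := hcov x hx
    rw [Finsupp.linearCombination_apply, Finsupp.sum,
      ← Finset.sum_fiberwise_of_maps_to hmap] at h1
    have h2 : ∃ n ∈ S, r ^ n ≤ ∑ i ∈ A n x, w i := by
      by_contra! hcon
      have h3 : ∑ n ∈ S, r ^ n < 1 := hN S (by
        intro n hn
        obtain ⟨p, -, rfl⟩ := Finset.mem_image.1 hn
        exact p.2)
      have h4 : ∑ n ∈ S, ∑ i ∈ A n x, w i ≤ ∑ n ∈ S, r ^ n :=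
        Finset.sum_le_sum fun n hn => (hcon n hn).le
      have h5 : ∀ n, ∑ i ∈ A n x, w i = ∑ i ∈ w.support with i.1.2 = n,
          w i • (bowenBall dist f α i.1.2 i.1.1 ε).indicator (fun _ => (1:ℝ)) x := by
        intro n
        simp only [A, I]
        rw [Finset.sum_filter]
        refine Finset.sum_congr rfl fun i _ => ?_
        by_cases hi : x ∈ bowenBall dist f α i.1.2 i.1.1 ε <;> simp [hi]
      simp only [h5] at h4
      linarith
    obtain ⟨n, hn, hAn⟩ := h2
    obtain ⟨B, ⟨y, hy, rfl, hB⟩, ⟨q, hq⟩, j, hj, hjB⟩ := hJF n (A n x) ⟨x, hx, rfl, hAn⟩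
    refine mem_iUnion₂.2 ⟨j, Finset.mem_biUnion.2 ⟨n, hn, hj⟩, ?_⟩
    simp only [A, I, Finset.mem_inter, Finset.mem_filter] at hq hjB
    have e1 := hq.1.1.2
    have e2 := hjB.1.2
    refine ball_three f α ε _ x y q.1.1 _ ?_ ?_ hjB.2
    · rw [e2, ← e1]; exact hq.1.2
    · rw [e2, ← e1]; exact hq.2.2
  · have hterm : ∀ p : {p : X × ℕ // N ≤ p.2},
        Real.exp (-s' * birk f φ p.1.2 p.1.1) ≤ r ^ p.1.2 * a p := by
      intro p
      rw [hr, ha, ← Real.exp_nat_mul, ← Real.exp_add]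
      apply Real.exp_le_exp.2
      have := hm p.1.2 p.1.1
      nlinarith
    rw [Finsupp.linearCombination_apply, Finsupp.sum,
      ← Finset.sum_fiberwise_of_maps_to hmap]
    rw [Finset.sum_biUnion]
    · refine Finset.sum_le_sum fun n hn => ?_
      calc ∑ p ∈ J n, Real.exp (-s' * birk f φ p.1.2 p.1.1)
          ≤ ∑ p ∈ J n, r ^ n * a p := by
            refine Finset.sum_le_sum fun p hp => ?_
            have := (Finset.mem_filter.1 (hJI n hp)).2
            have h2 := hterm p
            rw [this] at h2 ⊢
            exact h2
        _ = r ^ n * ∑ p ∈ J n, a p := (Finset.mul_sum _ _ _).symm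
        _ ≤ _ := hJ n
    · intro n _ n' _ hnn
      refine Finset.disjoint_left.2 fun p hp hp' => hnn ?_
      exact (Finset.mem_filter.1 (hJI n hp)).2.symm.trans (Finset.mem_filter.1 (hJI n' hp')).2

theorem center_mem (f : X → X) (α ε : ℝ) (hε : 0 < ε) (n : ℕ) (x : X) :
    x ∈ bowenBall dist f α n x ε := by
  intro i _
  simpa using hε

theorem ball_open (f : X → X) (hf : Continuous f) (α ε : ℝ) (n : ℕ) (x : X) :
    IsOpen (bowenBall dist f α n x ε) := by
  have : bowenBall dist f α n x ε =
      ⋂ i ∈ Finset.range n, {y | Real.exp (α * i) * dist (f^[i] x) (f^[i] y) < ε} := by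
    ext y; simp [bowenBall]
  rw [this]
  refine isOpen_biInter_finset fun i _ => ?_
  have := hf.iterate i
  exact isOpen_lt (by fun_prop) continuous_const

theorem birk_le (f : X → X) (φ : X → ℝ) (M : ℝ) (hM : ∀ x, φ x ≤ M) (n : ℕ) (x : X) :
    birk f φ n x ≤ n * M := by
  have := Finset.sum_le_card_nsmul (Finset.range n) (fun j => φ (f^[j] x)) M (fun _ _ => hM _)
  simpa [birk] using this

theorem le_birk (f : X → X) (φ : X → ℝ) (m : ℝ) (hm : ∀ x, m ≤ φ x) (n : ℕ) (x : X) :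
    n * m ≤ birk f φ n x := by
  have := Finset.card_nsmul_le_sum (Finset.range n) (fun j => φ (f^[j] x)) m (fun _ _ => hm _)
  simpa [birk] using this

theorem Mpre_le (f : X → X) (φ : X → ℝ) (M : ℝ) (hM : ∀ x, φ x ≤ M) (α ε s : ℝ) (hs : 0 ≤ s)
    (hε : 0 < ε)
    (N : ℕ) (K : Set X) (hK : K.Nonempty) (J : Finset {p : X × ℕ // N ≤ p.2})
    (hJ : K ⊆ ⋃ j ∈ J, bowenBall dist f α j.1.2 j.1.1 ε) :
    Mpre dist f φ α s ε N K ≤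
      ENNReal.ofReal (∑ j ∈ J, Real.exp (-s * birk f φ j.1.2 j.1.1)) := by
  obtain ⟨x0, hx0⟩ := hK
  obtain ⟨j0, hj0, -⟩ := mem_iUnion₂.1 (hJ hx0)
  let g : J → ℕ := fun j => (J.equivFin j : ℕ)
  have hg : Function.Injective g := Fin.val_injective.comp J.equivFin.injective
  let c : ℕ → X := Function.extend g (fun j => j.1.1.1) (fun _ => x0)
  let m : ℕ → ℕ := Function.extend g (fun j => j.1.1.2) (fun _ => 0)
  have hc : ∀ j, c (g j) = j.1.1.1 := fun j => hg.extend_apply _ _ j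
  have hmm : ∀ j, m (g j) = j.1.1.2 := fun j => hg.extend_apply _ _ j
  unfold Mpre
  refine iInf_le_of_le c <| iInf_le_of_le m <| iInf_le_of_le (range g) <|
    iInf_le_of_le ⟨_, mem_range_self ⟨j0, hj0⟩⟩ <| iInf_le_of_le ?_ <| iInf_le_of_le ?_ ?_
  · rintro _ ⟨j, rfl⟩
    rw [hmm]; exact j.1.2
  · intro x hx
    obtain ⟨j, hj, hxj⟩ := mem_iUnion₂.1 (hJ hx)
    refine mem_iUnion₂.2 ⟨g ⟨j, hj⟩, mem_range_self _, ?_⟩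
    rw [hc, hmm]; exact hxj
  · rw [tsum_range (f := fun i => ENNReal.ofReal
      (Real.exp (-s * sSup (birk f φ (m i) '' bowenBall dist f α (m i) (c i) ε)))) hg,
      tsum_fintype, ENNReal.ofReal_sum_of_nonneg (fun _ _ => (Real.exp_pos _).le),
      ← Finset.sum_coe_sort J]
    refine Finset.sum_le_sum fun j _ => ENNReal.ofReal_le_ofReal (Real.exp_le_exp.2 ?_)
    rw [hc, hmm]
    have : birk f φ j.1.1.2 j.1.1.1 ≤
        sSup (birk f φ j.1.1.2 '' bowenBall dist f α j.1.1.2 j.1.1.1 ε) := by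
      refine le_csSup ⟨j.1.1.2 * M, ?_⟩ ⟨_, center_mem f α ε hε _ _, rfl⟩
      rintro _ ⟨y, -, rfl⟩
      exact birk_le f φ M hM _ _
    nlinarith

theorem Mpre_mono (f : X → X) (φ : X → ℝ) (α ε s : ℝ) (K : Set X) :
    Monotone (fun N => Mpre dist f φ α s ε N K) := by
  intro N N' h
  refine iInf_mono fun c => iInf_mono fun m => iInf_mono fun I => iInf_mono fun hI => ?_
  exact iInf_mono' fun h1 => ⟨fun i hi => h.trans (h1 i hi), le_rfl⟩

end

section
variable {X : Type*} [MetricSpace X] [CompactSpace X] [MeasurableSpace X] [BorelSpace X]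

theorem frostman (f : X → X) (hf : Continuous f) (φ : X → ℝ) (m M : ℝ) (hm0 : 0 < m)
    (hm : ∀ x, m ≤ φ x) (hM : ∀ x, φ x ≤ M) (K : Set X) (hK : IsCompact K) (hKne : K.Nonempty)
    (α ε s s' : ℝ) (hε : 0 < ε) (hs : 0 ≤ s) (hss : s < s')
    (hlim : Mlim dist f φ α s' ε K ≠ 0) :
    ∃ μ : Measure X, IsProbabilityMeasure μ ∧ μ K = 1 ∧ ∃ C > 0, ∃ δ > 0, ∃ N : ℕ,
      ∀ n ≥ N, ∀ x, μ (bowenBall dist f α n x δ) ≤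
        ENNReal.ofReal (C * Real.exp (-s * birk f φ n x)) := by
  have hr1 : Real.exp (-(s' - s) * m) < 1 := by
    rw [Real.exp_lt_one_iff]; nlinarith
  have hsum := summable_geometric_of_lt_one (Real.exp_pos (-(s' - s) * m)).le hr1
  obtain ⟨S0, hS0⟩ := summable_iff_vanishing.1 hsum (Iio 1) (Iio_mem_nhds zero_lt_one)
  obtain ⟨N0, hN0⟩ : ∃ N0, Mpre dist f φ α s' ε N0 K ≠ 0 := by
    by_contra! h
    exact hlim (by simp [Mlim, h])
  set N := max N0 (S0.sup id + 1) with hNdef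
  have hN : ∀ S : Finset ℕ, (∀ n ∈ S, N ≤ n) →
      ∑ n ∈ S, Real.exp (-(s' - s) * m) ^ n < 1 := by
    intro S hS
    refine hS0 S (Finset.disjoint_left.2 fun n hn hn' => ?_)
    have h1 := hS n hn
    have h2 : n ≤ S0.sup id := Finset.le_sup (f := id) hn'
    omega
  have hMN : Mpre dist f φ α s' ε N K ≠ 0 := by
    have := Mpre_mono f φ α ε s' K (le_max_left N0 (S0.sup id + 1))
    exact fun h => hN0 (le_antisymm (this.trans h.le) bot_le)
  set c := (min (Mpre dist f φ α s' ε N K) 1).toReal with hc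
  have hctop : min (Mpre dist f φ α s' ε N K) 1 ≠ ⊤ := (min_le_right _ _).trans_lt one_lt_top |>.ne
  have hc0 : 0 < c := ENNReal.toReal_pos (by simp [hMN]) hctop
  have hcM : ENNReal.ofReal c ≤ Mpre dist f φ α s' ε N K := by
    rw [hc, ENNReal.ofReal_toReal hctop]; exact min_le_left _ _
  have : CompactSpace K := isCompact_iff_compactSpace.1 hK
  have : Nonempty K := hKne.to_subtype
  have hε3 : 0 < ε / 3 := by positivity
  obtain ⟨ν, hν, hνU⟩ := frostman_abs (Y := K) (ι := {p : X × ℕ // N ≤ p.2})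
    (fun p => Subtype.val ⁻¹' (bowenBall dist f α p.1.2 p.1.1 (ε / 3)))
    (fun p => (ball_open f hf α _ _ _).preimage continuous_subtype_val)
    (by
      refine eq_univ_of_forall fun y => mem_iUnion.2 ⟨⟨(y, N), le_rfl⟩, ?_⟩
      exact center_mem f α _ hε3 _ _)
    (fun p => c⁻¹ * Real.exp (-s * birk f φ p.1.2 p.1.1))
    (fun p => by positivity)
    (by
      intro w hw hcov
      obtain ⟨J, hJ1, hJ2⟩ := weighted_cover f φ α (ε / 3) s s' m K (le_birk f φ m hm) hss.le N hN
        w hw (fun x hx => hcov ⟨x, hx⟩)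
      rw [mul_div_cancel₀ _ (by norm_num : (3:ℝ) ≠ 0)] at hJ1
      have h1 := hcM.trans ((Mpre_le f φ M hM α ε s' (hs.trans hss.le) hε N K hKne J hJ1).trans
        (ENNReal.ofReal_le_ofReal hJ2))
      have h2 : c ≤ Finsupp.linearCombination ℝ (fun p : {p : X × ℕ // N ≤ p.2} =>
          Real.exp (-s * birk f φ p.1.2 p.1.1)) w := by
        by_contra! hlt
        exact absurd h1 (not_le.2 ((ENNReal.ofReal_lt_ofReal_iff hc0).2 hlt))
      have h3 : Finsupp.linearCombination ℝ (fun p : {p : X × ℕ // N ≤ p.2} =>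
          c⁻¹ * Real.exp (-s * birk f φ p.1.2 p.1.1)) w = c⁻¹ *
          Finsupp.linearCombination ℝ (fun p : {p : X × ℕ // N ≤ p.2} =>
          Real.exp (-s * birk f φ p.1.2 p.1.1)) w := by
        simp only [Finsupp.linearCombination_apply, Finsupp.sum, Finset.mul_sum, smul_eq_mul]
        exact Finset.sum_congr rfl fun i _ => by ring
      rw [h3, inv_mul_eq_div, le_div_iff₀ hc0, one_mul]
      exact h2)
  have hmeas : Measurable (Subtype.val : K → X) := measurable_subtype_coe
  refine ⟨ν.map Subtype.val, Measure.isProbabilityMeasure_map hmeas.aemeasurable, ?_,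
    c⁻¹, inv_pos.2 hc0, ε / 3, hε3, N, ?_⟩
  · rw [Measure.map_apply hmeas hK.measurableSet]
    simp
  · intro n hn x
    rw [Measure.map_apply hmeas (ball_open f hf α _ _ _).measurableSet]
    exact hνU ⟨(x, n), hn⟩

theorem le_negLog {t : ℝ≥0∞} {b : ℝ} (h : t ≤ ENNReal.ofReal (Real.exp (-b))) :
    ENNReal.ofReal b ≤ negLog t := by
  unfold negLog
  split_ifs with h0
  · exact le_top
  · refine ENNReal.ofReal_le_ofReal ?_
    have ht : t ≠ ⊤ := ne_top_of_le_ne_top ENNReal.ofReal_ne_top h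
    have h1 : t.toReal ≤ Real.exp (-b) := ENNReal.toReal_le_of_le_ofReal (Real.exp_pos _).le h
    have := (Real.log_le_iff_le_exp (ENNReal.toReal_pos h0 ht)).2 h1
    linarith

theorem le_of_lt_negLog {t : ℝ≥0∞} (ht : t ≠ ⊤) {b : ℝ} (hb : 0 ≤ b)
    (h : ENNReal.ofReal b < negLog t) :
    t ≤ ENNReal.ofReal (Real.exp (-b)) := by
  unfold negLog at h
  split_ifs at h with h0
  · simp [h0]
  · have h1 : b < -Real.log t.toReal := (ENNReal.ofReal_lt_ofReal_iff_of_nonneg hb).1 h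
    rw [← ENNReal.ofReal_toReal ht]
    refine ENNReal.ofReal_le_ofReal ?_
    rw [← Real.log_le_iff_le_exp (ENNReal.toReal_pos h0 ht)]
    linarith

theorem BK_ge (f : X → X) (φ : X → ℝ) (m : ℝ) (hm0 : 0 < m)
    (hm : ∀ x, m ≤ φ x) (α s c : ℝ) (hcs : c < s) (hc : 0 ≤ c) (μ : Measure X)
    [IsProbabilityMeasure μ] (C δ : ℝ) (hC : 0 < C) (hδ : 0 < δ) (N : ℕ)
    (h : ∀ n ≥ N, ∀ x, μ (bowenBall dist f α n x δ) ≤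
        ENNReal.ofReal (C * Real.exp (-s * birk f φ n x))) :
    ENNReal.ofReal c ≤ BKphi dist f φ α μ := by
  have hx : ∀ x, ENNReal.ofReal c ≤ localBKphi dist f φ α μ x := by
    intro x
    refine le_iSup₂_of_le δ hδ ?_
    refine le_liminf_of_le (by isBoundedDefault) ?_
    obtain ⟨n0, hn0⟩ := exists_nat_gt (Real.log C / ((s - c) * m))
    filter_upwards [eventually_ge_atTop N, eventually_ge_atTop n0, eventually_ge_atTop 1]
      with n h1 h2 h3
    have hb := le_birk f φ m hm n x
    have h3' : (1:ℝ) ≤ n := by exact_mod_cast h3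
    have hb0 : 0 < birk f φ n x := lt_of_lt_of_le (by positivity) hb
    have hsc : 0 < s - c := sub_pos.2 hcs
    rw [ENNReal.le_div_iff_mul_le (Or.inl (by simpa using hb0)) (Or.inl ENNReal.ofReal_ne_top),
      ← ENNReal.ofReal_mul hc]
    refine le_negLog ((h n h1 x).trans (ENNReal.ofReal_le_ofReal ?_))
    have hlog : Real.log C ≤ (s - c) * birk f φ n x := by
      rw [div_lt_iff₀ (by positivity)] at hn0
      have h2' : (n0:ℝ) ≤ n := by exact_mod_cast h2
      calc Real.log C ≤ n0 * ((s - c) * m) := hn0.le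
        _ ≤ n * ((s - c) * m) := by gcongr
        _ = (s - c) * (n * m) := by ring
        _ ≤ _ := by gcongr
    calc C * Real.exp (-s * birk f φ n x)
        = Real.exp (Real.log C + -s * birk f φ n x) := by rw [Real.exp_add, Real.exp_log hC]
      _ ≤ _ := Real.exp_le_exp.2 (by linarith)
  calc ENNReal.ofReal c = ∫⁻ _, ENNReal.ofReal c ∂μ := by simp
    _ ≤ _ := lintegral_mono hx

theorem upper (f : X → X) (φ : X → ℝ) (hφc : Continuous φ) (m M : ℝ)
    (hm0 : 0 < m) (hm : ∀ x, m ≤ φ x) (hM : ∀ x, φ x ≤ M) (K : Set X) (hK : IsCompact K)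
    (α : ℝ) (hα : 0 ≤ α) (μ : Measure X) [IsProbabilityMeasure μ] (hμ : μ K = 1)
    (c s : ℝ) (hc : 0 ≤ c) (hcs : c < s) (hs : ENNReal.ofReal s < BKphi dist f φ α μ) :
    ∃ ε > 0, ∀ s', 0 ≤ s' → Mlim dist f φ α s' ε K = 0 → c ≤ s' := by
  have hs0 : 0 < s := hc.trans_lt hcs
  have hω : 0 < (s - c) * m / s := by
    have := sub_pos.2 hcs
    positivity
  obtain ⟨η, hη, huc⟩ := Metric.uniformContinuous_iff.1
    (CompactSpace.uniformContinuous_of_continuous hφc) _ hω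
  let A : ℕ → ℕ → Set X := fun k N => {x | x ∈ K ∧ ∀ n ≥ N,
    ENNReal.ofReal s < negLog (μ (bowenBall dist f α n x (η / (k + 1)))) /
      ENNReal.ofReal (birk f φ n x)}
  have hA : ∃ k N, μ (A k N) ≠ 0 := by
    by_contra! hcon
    have h0 : μ (⋃ k, ⋃ N, A k N) = 0 :=
      measure_iUnion_null fun k => measure_iUnion_null fun N => hcon k N
    have hKae : ∀ᵐ x ∂μ, x ∈ K := by
      rw [← prob_compl_eq_zero_iff hK.measurableSet] at hμ
      exact hμ
    refine absurd hs (not_lt.2 ?_)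
    calc BKphi dist f φ α μ ≤ ∫⁻ _, ENNReal.ofReal s ∂μ := by
          refine lintegral_mono_ae ?_
          filter_upwards [measure_eq_zero_iff_ae_notMem.1 h0, hKae] with x hx hxK
          by_contra! hlt
          apply hx
          obtain ⟨e, he⟩ := lt_iSup_iff.1 hlt
          obtain ⟨he0, he⟩ := lt_iSup_iff.1 he
          obtain ⟨N, hN⟩ := eventually_atTop.1 (eventually_lt_of_lt_liminf he)
          obtain ⟨k, hk⟩ := exists_nat_gt (η / e)
          refine mem_iUnion₂.2 ⟨k, N, hxK, fun n hn => (hN n hn).trans_le ?_⟩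
          refine ENNReal.div_le_div_right ?_ _
          have hsub : bowenBall dist f α n x (η / (k + 1)) ⊆ bowenBall dist f α n x e := by
            intro y hy i hi
            refine (hy i hi).trans_le ?_
            rw [div_lt_iff₀ he0] at hk
            rw [div_le_iff₀ (by positivity)]
            nlinarith
          have hle := measure_mono (μ := μ) hsub
          unfold negLog
          split_ifs with h1 h2 h2
          · exact le_rfl
          · exact absurd (le_antisymm (hle.trans h1.le) bot_le) h2
          · exact le_top
          · refine ENNReal.ofReal_le_ofReal (neg_le_neg ?_)
            exact Real.log_le_log (ENNReal.toReal_pos h2 (measure_ne_top _ _))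
              (ENNReal.toReal_mono (measure_ne_top _ _) hle)
      _ = _ := by simp
  obtain ⟨k, N, hkN⟩ := hA
  set ε := η / (k + 1) with hεdef
  have hε : 0 < ε := by positivity
  have hεη : ε ≤ η := div_le_self hη.le (by linarith [(Nat.cast_nonneg k : (0:ℝ) ≤ k)])
  refine ⟨ε / 2, by positivity, fun s' hs' hlim => ?_⟩
  by_contra! hlt
  have hM0 : Mpre dist f φ α s' (ε / 2) N K = 0 :=
    le_antisymm ((le_iSup (fun N => Mpre dist f φ α s' (ε / 2) N K) N).trans hlim.le) bot_le
  refine hkN (le_antisymm (le_trans ?_ hM0.le) bot_le)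
  unfold Mpre
  refine le_iInf fun x => le_iInf fun n => le_iInf fun I => le_iInf fun _ => le_iInf fun hnI =>
    le_iInf fun hcov => ?_
  have hsubA : A k N ⊆ ⋃ i ∈ I, (A k N ∩ bowenBall dist f α (n i) (x i) (ε / 2)) := by
    intro y hy
    obtain ⟨i, hi, hyi⟩ := mem_iUnion₂.1 (hcov hy.1)
    exact mem_iUnion₂.2 ⟨i, hi, hy, hyi⟩
  refine (measure_mono hsubA).trans ((measure_biUnion_le μ I.to_countable _).trans ?_)
  refine ENNReal.tsum_le_tsum fun i => ?_
  rcases (A k N ∩ bowenBall dist f α (n i) (x i) (ε / 2)).eq_empty_or_nonempty with he | ⟨y, hyA, hyB⟩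
  · rw [he]; simp
  have hsub : bowenBall dist f α (n i) (x i) (ε / 2) ⊆ bowenBall dist f α (n i) y ε := by
    intro z hz j hj
    have h1 := hz j hj
    have h2 := hyB j hj
    have t := dist_triangle_left (f^[j] y) (f^[j] z) (f^[j] (x i))
    have e := Real.exp_pos (α * j)
    nlinarith
  have h1 := hyA.2 (n i) (hnI i i.2)
  have hby := le_birk f φ m hm (n i) y
  have hby0 : 0 ≤ birk f φ (n i) y := le_trans (by positivity) hby
  have h2 := ENNReal.mul_lt_of_lt_div h1
  rw [← ENNReal.ofReal_mul hs0.le] at h2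
  have h3 := le_of_lt_negLog (measure_ne_top _ _) (by positivity) h2
  refine (measure_mono (inter_subset_right.trans hsub)).trans (h3.trans
    (ENNReal.ofReal_le_ofReal (Real.exp_le_exp.2 ?_)))
  rw [neg_mul, neg_le_neg_iff]
  set ω := (s - c) * m / s with hωdef
  have hsup : sSup (birk f φ (n i) '' bowenBall dist f α (n i) (x i) (ε / 2)) ≤
      birk f φ (n i) y + n i * ω := by
    refine csSup_le (Nonempty.image _ ⟨_, center_mem f α _ (by positivity) _ _⟩) ?_
    rintro _ ⟨z, hz, rfl⟩
    have hz' := hsub hz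
    have hpt : ∀ j ∈ Finset.range (n i), φ (f^[j] z) ≤ φ (f^[j] y) + ω := by
      intro j hj
      have h4 := hz' j (Finset.mem_range.1 hj)
      have h5 : 1 ≤ Real.exp (α * j) := Real.one_le_exp (by positivity)
      have h6 : dist (f^[j] y) (f^[j] z) < η := by
        nlinarith [dist_nonneg (x := f^[j] y) (y := f^[j] z)]
      have h7 := huc h6
      rw [Real.dist_eq, abs_lt] at h7
      linarith [h7.1]
    have := Finset.sum_le_sum hpt
    rw [Finset.sum_add_distrib] at this
    simpa [birk] using this
  have hsω : s * ω = (s - c) * m := by rw [hωdef]; field_simp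
  have hn0 : (0:ℝ) ≤ n i := Nat.cast_nonneg _
  have hnω : 0 ≤ n i * ω := by positivity
  calc s' * sSup (birk f φ (n i) '' bowenBall dist f α (n i) (x i) (ε / 2))
      ≤ s' * (birk f φ (n i) y + n i * ω) := by gcongr
    _ ≤ c * (birk f φ (n i) y + n i * ω) := by gcongr
    _ = c * birk f φ (n i) y + c * (n i * ω) := by ring
    _ ≤ c * birk f φ (n i) y + s * (n i * ω) := by gcongr
    _ = c * birk f φ (n i) y + (s - c) * (n i * m) := by
      rw [mul_left_comm s, hsω]; ring
    _ ≤ c * birk f φ (n i) y + (s - c) * birk f φ (n i) y := by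
      have : 0 ≤ s - c := (sub_pos.2 hcs).le
      gcongr
    _ = s * birk f φ (n i) y := by ring

end

/-- variational principle: for a non-empty compact `K`,
`dim_BS^α(f,K,φ) = sup {P_μ^α(f,φ) : μ Borel probability, μ(K) = 1}`. -/
theorem stmt11 {X : Type*} [MetricSpace X] [CompactSpace X]
    [MeasurableSpace X] [BorelSpace X]
    (f : X → X) (hf : Continuous f)
    (φ : X → ℝ) (hφc : Continuous φ) (hφ : ∀ x, 0 < φ x)
    (K : Set X) (hK : IsCompact K) (hKne : K.Nonempty) (α : ℝ) (hα : 0 ≤ α) :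
    dimBS dist f φ α K =
      ⨆ (μ : Measure X) (_ : IsProbabilityMeasure μ) (_ : μ K = 1),
        (BKphi dist f φ α μ : EReal) := by
  obtain ⟨x0, hx0⟩ := hKne
  have : Nonempty X := ⟨x0⟩
  obtain ⟨xm, -, hxm⟩ := isCompact_univ.exists_isMinOn univ_nonempty hφc.continuousOn
  obtain ⟨xM, -, hxM⟩ := isCompact_univ.exists_isMaxOn univ_nonempty hφc.continuousOn
  have hm : ∀ x, φ xm ≤ φ x := fun x => hxm (mem_univ x)
  have hM : ∀ x, φ x ≤ φ xM := fun x => hxM (mem_univ x)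
  have hm0 := hφ xm
  have hdim0 : 0 ≤ dimBS dist f φ α K := by
    refine le_iSup₂_of_le 1 one_pos ?_
    exact le_iInf fun s => le_iInf fun hs => le_iInf fun _ => by exact_mod_cast hs
  apply le_antisymm
  · refine le_of_forall_lt fun b hb => ?_
    have hsup0 : (0 : EReal) ≤ ⨆ (μ : Measure X) (_ : IsProbabilityMeasure μ) (_ : μ K = 1),
        (BKphi dist f φ α μ : EReal) := by
      refine le_iSup_of_le (Measure.dirac x0) (le_iSup_of_le inferInstance (le_iSup_of_le ?_ ?_))
      · exact Measure.dirac_apply_of_mem hx0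
      · exact EReal.coe_ennreal_nonneg _
    rcases lt_or_ge b 0 with hb0 | hb0
    · exact hb0.trans_le hsup0
    obtain ⟨c, hbc, hc⟩ := EReal.lt_iff_exists_real_btwn.1 hb
    obtain ⟨s, hcs, hs⟩ := EReal.lt_iff_exists_real_btwn.1 hc
    obtain ⟨s', hss, hs'⟩ := EReal.lt_iff_exists_real_btwn.1 hs
    have hc0 : 0 ≤ c := by exact_mod_cast (hb0.trans hbc.le)
    have hcs : c < s := by exact_mod_cast hcs
    have hss : s < s' := by exact_mod_cast hss
    obtain ⟨ε, h1⟩ := lt_iSup_iff.1 hs'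
    obtain ⟨hε, h1⟩ := lt_iSup_iff.1 h1
    have hlim : Mlim dist f φ α s' ε K ≠ 0 := by
      intro h
      refine absurd h1 (not_lt.2 ?_)
      exact iInf_le_of_le s' (iInf_le_of_le (hc0.trans (hcs.trans hss).le) (iInf_le_of_le h le_rfl))
    obtain ⟨μ, hμ, hμK, C, hC, δ, hδ, N, hN⟩ := frostman f hf φ _ _ hm0 hm hM K hK ⟨x0, hx0⟩ α ε s s'
      hε (hc0.trans hcs.le) hss hlim
    have h2 := BK_ge f φ _ hm0 hm α s c hcs hc0 μ C δ hC hδ N hN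
    refine hbc.trans_le (le_iSup_of_le μ (le_iSup_of_le hμ (le_iSup_of_le hμK ?_)))
    have h3 : ((ENNReal.ofReal c : ℝ≥0∞) : EReal) ≤ BKphi dist f φ α μ :=
      EReal.coe_ennreal_le_coe_ennreal_iff.2 h2
    rwa [EReal.coe_ennreal_ofReal, max_eq_left hc0] at h3
  · refine iSup_le fun μ => iSup_le fun hμ => iSup_le fun hμK => ?_
    refine le_of_forall_lt fun b hb => ?_
    obtain ⟨c, hbc, hc⟩ := EReal.lt_iff_exists_real_btwn.1 hb
    refine hbc.trans_le ?_
    rcases lt_or_ge c 0 with hc0 | hc0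
    · exact le_trans (by exact_mod_cast hc0.le) hdim0
    obtain ⟨s, hcs, hs⟩ := EReal.lt_iff_exists_real_btwn.1 hc
    have hcs : c < s := by exact_mod_cast hcs
    have hs1 : ENNReal.ofReal s < BKphi dist f φ α μ := by
      rw [← EReal.coe_ennreal_lt_coe_ennreal_iff, EReal.coe_ennreal_ofReal,
        max_eq_left (hc0.trans hcs.le)]
      exact hs
    obtain ⟨ε, hε, h⟩ := upper f φ hφc _ _ hm0 hm hM K hK α hα μ hμK c s hc0 hcs hs1
    refine le_iSup₂_of_le ε hε ?_
    exact le_iInf fun s' => le_iInf fun hs' => le_iInf fun h0 => by exact_mod_cast h s' hs' h0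

end
end

section
/- Let (X,d,f) be a TDS. Then for every α > 0, sup{ \underline{h}_μ^{BK}(f,α) : μ an f-invariant Borel probability measure on X } ≤ h_top^α(f,X), where \underline{h}_μ^{BK}(f,α) = ∫_X lim_{ε→0} liminf_{n→∞} (−log μ(B_n^α(x,ε)))/n dμ(x) is the lower α-local Brin–Katok entropy of μ. -/
open Filter Set MeasureTheory ENNReal
open scoped Classical NNReal

noncomputable section

open AlphaBS

lemma aux_span {X : Type*} [MetricSpace X] [CompactSpace X]
    (f : X → X) (hf : Continuous f) (α ε : ℝ) (hε : 0 < ε) (n : ℕ) :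
    ∃ E : Finset X, E.card = spanNum dist f α ε n ∧
      ∀ x : X, ∃ y ∈ E, x ∈ bowenBall dist f α n y ε := by
  have hne : {m : ℕ | ∃ E : Finset X, E.card = m ∧
      ∀ x : X, ∃ y ∈ E, ∀ i < n, Real.exp (α * i) * dist (f^[i] y) (f^[i] x) < ε}.Nonempty := by
    obtain ⟨t, ht⟩ := isCompact_univ.elim_finite_subcover
      (fun y : X => bowenBall dist f α n y ε) (by
        intro y
        have : bowenBall dist f α n y ε = ⋂ i ∈ Set.Iio n,
            {x | Real.exp (α * (i : ℕ)) * dist (f^[i] y) (f^[i] x) < ε} := by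
          ext x; simp [bowenBall]
        rw [this]
        refine (Set.finite_Iio n).isOpen_biInter fun i _ => ?_
        exact isOpen_lt (continuous_const.mul (continuous_const.dist (hf.iterate i)))
          continuous_const) (by
        intro x _
        exact mem_iUnion.2 ⟨x, fun i _ => by simpa using hε⟩)
    refine ⟨t.card, t, rfl, fun x => ?_⟩
    have := ht (mem_univ x)
    simp only [mem_iUnion] at this
    obtain ⟨y, hy, h⟩ := this
    exact ⟨y, hy, h⟩
  exact Nat.sInf_mem hne

lemma aux_ae {X : Type*} [MetricSpace X] [CompactSpace X]
    [MeasurableSpace X] [BorelSpace X]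
    (f : X → X) (hf : Continuous f) (α : ℝ) (μ : Measure X)
    (ε c' c : ℝ) (hε : 0 < ε) (hcc : c' < c)
    (h : htopSpan dist f α < c') :
    ∀ᵐ x ∂μ, liminf (fun n : ℕ => negLog (μ (bowenBall dist f α n x ε)) / (n : ℝ≥0∞)) atTop
      ≤ ENNReal.ofReal c := by
  have h1 : htopSpanE dist f α (ε/2) < c' :=
    lt_of_le_of_lt (le_iSup₂ (f := fun (e : ℝ) (_ : 0 < e) => htopSpanE dist f α e)
      (ε/2) (half_pos hε)) h
  have h2 : ∀ᶠ n : ℕ in atTop, (spanNum dist f α (ε/2) n : ℝ) ≤ Real.exp (n * c') := by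
    filter_upwards [eventually_lt_of_limsup_lt h1, eventually_gt_atTop 0] with n hn hn0
    have hn' : Real.log (spanNum dist f α (ε/2) n) / n < c' := by exact_mod_cast hn
    have hnp : (0 : ℝ) < n := by exact_mod_cast hn0
    rw [div_lt_iff₀ hnp] at hn'
    rcases Nat.eq_zero_or_pos (spanNum dist f α (ε/2) n) with h0 | h0
    · rw [h0]; simpa using (Real.exp_pos _).le
    · rw [← Real.log_le_iff_le_exp (by exact_mod_cast h0)]
      linarith
  let A : ℕ → Set X := fun n => {x | (spanNum dist f α (ε/2) n : ℝ) ≤ Real.exp (n * c') ∧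
    μ (bowenBall dist f α n x ε) < ENNReal.ofReal (Real.exp (-(n * c)))}
  have hA : ∀ n, μ (A n) ≤ ENNReal.ofReal (Real.exp (c' - c) ^ n) := by
    intro n
    by_cases hs : (spanNum dist f α (ε/2) n : ℝ) ≤ Real.exp (n * c')
    swap
    · have : A n = ∅ := by ext x; simp [A, hs]
      simp [this]
    obtain ⟨E, hE, hcov⟩ := aux_span f hf α (ε/2) (half_pos hε) n
    have key : ∀ y x, x ∈ bowenBall dist f α n y (ε/2) →
        bowenBall dist f α n y (ε/2) ⊆ bowenBall dist f α n x ε := by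
      intro y x hx z hz i hi
      have a := hx i hi
      have b := hz i hi
      have t := dist_triangle_left (f^[i] x) (f^[i] z) (f^[i] y)
      have := mul_le_mul_of_nonneg_left t (Real.exp_pos (α * i)).le
      linarith
    have hsub : A n ⊆ ⋃ y ∈ E, (A n ∩ bowenBall dist f α n y (ε/2)) := by
      intro x hx
      obtain ⟨y, hy, hxy⟩ := hcov x
      simp only [mem_iUnion]
      exact ⟨y, hy, hx, hxy⟩
    calc μ (A n) ≤ μ (⋃ y ∈ E, (A n ∩ bowenBall dist f α n y (ε/2))) := measure_mono hsub
      _ ≤ ∑ y ∈ E, μ (A n ∩ bowenBall dist f α n y (ε/2)) := measure_biUnion_finset_le _ _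
      _ ≤ ∑ y ∈ E, ENNReal.ofReal (Real.exp (-(n * c))) := by
        refine Finset.sum_le_sum fun y _ => ?_
        rcases (A n ∩ bowenBall dist f α n y (ε/2)).eq_empty_or_nonempty with h0 | ⟨x, hx, hxy⟩
        · simp [h0]
        · exact ((measure_mono (inter_subset_right.trans (key y x hxy))).trans_lt hx.2).le
      _ = ENNReal.ofReal ((spanNum dist f α (ε/2) n : ℝ) * Real.exp (-(n * c))) := by
        rw [Finset.sum_const, hE, nsmul_eq_mul, ENNReal.ofReal_mul (by positivity)]
        simp
      _ ≤ _ := by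
        refine ENNReal.ofReal_le_ofReal ?_
        calc _ ≤ Real.exp (n * c') * Real.exp (-(n * c)) := by gcongr
          _ = _ := by rw [← Real.exp_add, ← Real.exp_nat_mul]; ring_nf
  have hsum : ∑' n, μ (A n) ≠ ⊤ := by
    refine ne_top_of_le_ne_top ?_ (ENNReal.tsum_le_tsum hA)
    have : Summable fun n : ℕ => Real.exp (c' - c) ^ n :=
      summable_geometric_of_lt_one (Real.exp_pos _).le (by rw [Real.exp_lt_one_iff]; linarith)
    exact this.tsum_ofReal_ne_top
  filter_upwards [ae_eventually_notMem hsum] with x hx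
  refine liminf_le_of_frequently_le' (Eventually.frequently ?_)
  filter_upwards [hx, h2, eventually_gt_atTop 0] with n hn hs hn0
  have hb : ENNReal.ofReal (Real.exp (-(n * c))) ≤ μ (bowenBall dist f α n x ε) := by
    by_contra hcon
    exact hn ⟨hs, not_le.1 hcon⟩
  have hpos : 0 < μ (bowenBall dist f α n x ε) :=
    lt_of_lt_of_le (ENNReal.ofReal_pos.2 (Real.exp_pos _)) hb
  have hnc : (n : ℝ≥0∞) ≠ 0 := by exact_mod_cast hn0.ne'
  rw [ENNReal.div_le_iff hnc (by simp)]
  rw [negLog, if_neg hpos.ne']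
  have : ENNReal.ofReal c * n = ENNReal.ofReal (c * n) := by
    rw [ENNReal.ofReal_mul' (by positivity)]; simp
  rw [this]
  rcases eq_or_ne (μ (bowenBall dist f α n x ε)) ⊤ with htop | htop
  · simp [htop]
  refine ENNReal.ofReal_le_ofReal ?_
  have h3 : Real.exp (-(n * c)) ≤ (μ (bowenBall dist f α n x ε)).toReal :=
    (ENNReal.ofReal_le_iff_le_toReal htop).1 hb
  have h4 := (Real.le_log_iff_exp_le (ENNReal.toReal_pos hpos.ne' htop)).2 h3
  linarith

/-- `sup_μ \underline h_μ^{BK}(f,α) ≤ h_top^α(f,X)` over `f`-invariant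
Borel probability measures `μ`. -/
theorem stmt13 {X : Type*} [MetricSpace X] [CompactSpace X]
    [MeasurableSpace X] [BorelSpace X]
    (f : X → X) (hf : Continuous f) (α : ℝ) (hα : 0 < α) :
    ((⨆ (μ : Measure X) (_ : IsProbabilityMeasure μ)
        (_ : ∀ s : Set X, MeasurableSet s → μ (f ⁻¹' s) = μ s),
        BKn dist f α μ : ℝ≥0∞) : EReal) ≤ htopSpan dist f α := by
  have h0 : 0 ≤ htopSpan dist f α := by
    refine le_trans ?_ (le_iSup₂ (f := fun (e : ℝ) (_ : 0 < e) => htopSpanE dist f α e)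
      1 one_pos)
    refine le_limsup_of_frequently_le' (Eventually.frequently (Eventually.of_forall fun n => ?_))
    have : (0 : ℝ) ≤ Real.log (spanNum dist f α 1 n) / n :=
      div_nonneg (Real.log_natCast_nonneg _) (Nat.cast_nonneg _)
    exact_mod_cast this
  refine le_of_forall_gt_imp_ge_of_dense fun C hC => ?_
  obtain ⟨c, hc1, hc2⟩ := EReal.lt_iff_exists_real_btwn.1 hC
  obtain ⟨c', hc3, hc4⟩ := EReal.lt_iff_exists_real_btwn.1 hc1
  refine le_trans ?_ hc2.le
  have hc0 : 0 ≤ c := by exact_mod_cast h0.trans hc1.le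
  have hcc : c' < c := by exact_mod_cast hc4
  have : (c : EReal) = ((ENNReal.ofReal c : ℝ≥0∞) : EReal) := by
    rw [EReal.coe_ennreal_ofReal, max_eq_left hc0]
  rw [this, EReal.coe_ennreal_le_coe_ennreal_iff]
  refine iSup_le fun μ => iSup_le fun hμ => iSup_le fun _ => ?_
  have hae : ∀ᵐ x ∂μ, localBKn dist f α μ x ≤ ENNReal.ofReal c := by
    have hk : ∀ᵐ x ∂μ, ∀ k : ℕ, liminf (fun n : ℕ =>
        negLog (μ (bowenBall dist f α n x (1 / ((k : ℝ) + 1)))) / (n : ℝ≥0∞)) atTop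
        ≤ ENNReal.ofReal c :=
      ae_all_iff.2 fun k => aux_ae f hf α μ _ c' c (by positivity) hcc hc3
    filter_upwards [hk] with x hx
    refine iSup₂_le fun ε hε => ?_
    obtain ⟨k, hk⟩ := exists_nat_one_div_lt hε
    refine le_trans (liminf_le_liminf (Eventually.of_forall fun n => ?_)) (hx k)
    refine ENNReal.div_le_div_right ?_ _
    have hm : μ (bowenBall dist f α n x (1 / ((k : ℝ) + 1))) ≤ μ (bowenBall dist f α n x ε) :=
      measure_mono fun y hy i hi => (hy i hi).trans hk
    unfold negLog
    by_cases h1 : μ (bowenBall dist f α n x (1 / ((k : ℝ) + 1))) = 0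
    · rw [if_pos h1]; exact le_top
    have h2 : μ (bowenBall dist f α n x ε) ≠ 0 := fun h => h1 (le_antisymm (h ▸ hm) bot_le)
    rw [if_neg h1, if_neg h2]
    refine ENNReal.ofReal_le_ofReal (neg_le_neg (Real.log_le_log ?_ ?_))
    · exact ENNReal.toReal_pos h1 (measure_ne_top _ _)
    · exact ENNReal.toReal_mono (measure_ne_top _ _) hm
  calc BKn dist f α μ ≤ ∫⁻ _, ENNReal.ofReal c ∂μ := lintegral_mono_ae hae
    _ = ENNReal.ofReal c := by simp

end
end
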